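/- The family of elements e(Y₁+Y₂)^{a₁}(Y₁Y₂)^{a₂}(t⁻²Y₁X₁+Y₂X₂)^{ε}(X₁+X₂)^{b₁}(X₁X₂)^{b₂}e, with ε ∈ {0,1}, a₁, b₁ ∈ ℕ₀ and a₂, b₂ ∈ ℤ (negative exponents interpreted via the inverse generators), is a ℂ-vector-space basis of the spherical double affine Hecke algebra eH_{t,q}e. -/

import Mathlib

noncomputable section

/-- Generators of the double affine Hecke algebra of type GL₂:
`T, T⁻¹, X₁, X₁⁻¹, X₂, X₂⁻¹, Y₁, Y₁⁻¹, Y₂, Y₂⁻¹`. -/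
inductive DGen : Type
  | T | Ti | X1 | X1i | X2 | X2i | Y1 | Y1i | Y2 | Y2i

abbrev FD : Type := FreeAlgebra ℂ DGen

def gD : DGen → FD := FreeAlgebra.ι ℂ

/-- The defining relations of the double affine Hecke algebra `H_{t,q}` of type GL₂. -/
inductive DRel (q t : ℂ) : FD → FD → Prop
  | TTi : DRel q t (gD .T * gD .Ti) 1
  | TiT : DRel q t (gD .Ti * gD .T) 1
  | X1X1i : DRel q t (gD .X1 * gD .X1i) 1
  | X1iX1 : DRel q t (gD .X1i * gD .X1) 1
  | X2X2i : DRel q t (gD .X2 * gD .X2i) 1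
  | X2iX2 : DRel q t (gD .X2i * gD .X2) 1
  | Y1Y1i : DRel q t (gD .Y1 * gD .Y1i) 1
  | Y1iY1 : DRel q t (gD .Y1i * gD .Y1) 1
  | Y2Y2i : DRel q t (gD .Y2 * gD .Y2i) 1
  | Y2iY2 : DRel q t (gD .Y2i * gD .Y2) 1
  | TX1T : DRel q t (gD .T * gD .X1 * gD .T) (gD .X2)
  | TiY1Ti : DRel q t (gD .Ti * gD .Y1 * gD .Ti) (gD .Y2)
  | Xcomm : DRel q t (gD .X1 * gD .X2) (gD .X2 * gD .X1)
  | Ycomm : DRel q t (gD .Y1 * gD .Y2) (gD .Y2 * gD .Y1)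
  | YXX : DRel q t (gD .Y1 * (gD .X1 * gD .X2)) ((q ^ 2) • (gD .X1 * gD .X2 * gD .Y1))
  | X1iY2 : DRel q t (gD .X1i * gD .Y2) (gD .Y2 * gD .X1i * gD .Ti * gD .Ti)
  | hecke : DRel q t ((gD .T + algebraMap ℂ FD t⁻¹) * (gD .T - algebraMap ℂ FD t)) 0

/-- The double affine Hecke algebra `H_{t,q}` of type GL₂. -/
abbrev DAHA (q t : ℂ) : Type := RingQuot (DRel q t)

variable (q t : ℂ)

def T : DAHA q t := RingQuot.mkAlgHom ℂ (DRel q t) (gD .T)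
def Ti : DAHA q t := RingQuot.mkAlgHom ℂ (DRel q t) (gD .Ti)
def X1 : DAHA q t := RingQuot.mkAlgHom ℂ (DRel q t) (gD .X1)
def X1i : DAHA q t := RingQuot.mkAlgHom ℂ (DRel q t) (gD .X1i)
def X2 : DAHA q t := RingQuot.mkAlgHom ℂ (DRel q t) (gD .X2)
def X2i : DAHA q t := RingQuot.mkAlgHom ℂ (DRel q t) (gD .X2i)
def Y1 : DAHA q t := RingQuot.mkAlgHom ℂ (DRel q t) (gD .Y1)
def Y1i : DAHA q t := RingQuot.mkAlgHom ℂ (DRel q t) (gD .Y1i)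
def Y2 : DAHA q t := RingQuot.mkAlgHom ℂ (DRel q t) (gD .Y2)
def Y2i : DAHA q t := RingQuot.mkAlgHom ℂ (DRel q t) (gD .Y2i)

/-- Integer powers of an element `x` with designated inverse `xi`:
negative exponents are interpreted via the inverse generator. -/
def zp {M : Type*} [Monoid M] (x xi : M) : ℤ → M
  | Int.ofNat n => x ^ n
  | Int.negSucc n => xi ^ (n + 1)

/-- The symmetrizing idempotent `e = (1 + tT)/(1 + t²)` of the DAHA. -/
def eSym (q t : ℂ) : DAHA q t := ((1 + t ^ 2)⁻¹ : ℂ) • (1 + t • T q t)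

/-- The spherical subalgebra `eH_{t,q}e`, as the ℂ-submodule of `H_{t,q}` which is
the range of the linear map `x ↦ e·x·e`. -/
def sDAHA (q t : ℂ) : Submodule ℂ (DAHA q t) :=
  LinearMap.range ((LinearMap.mulLeft ℂ (eSym q t)).comp (LinearMap.mulRight ℂ (eSym q t)))

/-- The family `e(Y₁+Y₂)^{a₁}(Y₁Y₂)^{a₂}(t⁻²Y₁X₁+Y₂X₂)^{ε}(X₁+X₂)^{b₁}(X₁X₂)^{b₂}e`,
indexed by `a₁, b₁ ∈ ℕ`, `a₂, b₂ ∈ ℤ`, `ε ∈ {0,1}`. -/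
def pbwSph (q t : ℂ) : ℕ × ℤ × Fin 2 × ℕ × ℤ → DAHA q t :=
  fun x => eSym q t *
    ((Y1 q t + Y2 q t) ^ x.1 * zp (Y1 q t * Y2 q t) (Y1i q t * Y2i q t) x.2.1 *
      ((t⁻¹ ^ 2) • (Y1 q t * X1 q t) + Y2 q t * X2 q t) ^ (x.2.2.1 : ℕ) *
      (X1 q t + X2 q t) ^ x.2.2.2.1 * zp (X1 q t * X2 q t) (X1i q t * X2i q t) x.2.2.2.2) *
    eSym q t


/-!
In terms of `T`, `X₁` and `π = T⁻¹ Y₁` the relations of `H_{t,q}` say that `π` permutes `X₁` and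
`X₂` up to `q²` and that `π² = Y₁ Y₂`.

*Spanning.* Symmetric Laurent polynomials in the `Xᵢ`, or in the `Yᵢ`, commute with `T`, hence with
`e`. The bimodule `∑ K[Y^±¹]^S₂ g K[X^±¹]` over `g ∈ {e, e π}` contains `e` and is stable under
right multiplication by `T`, `X₁^±¹` and `π^±¹`, so it contains `e H`. Since `K[X^±¹]` is free over
its symmetric part on `1, X₁`, what remains after multiplying by `e` on the right are the elements
`e`, `e π e`, `e X₁ e` and `e π X₁ e`, which are proportional to `e`, `(Y₁ + Y₂) e`, `(X₁ + X₂) e`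
and `e W e`, where `W = t⁻² Y₁ X₁ + Y₂ X₂`.

*Independence.* Let `H` act by Demazure–Lusztig operators on functions on the orbit of a generic
point `(x₁, x₂)` under the extended affine Weyl group, and apply the family to the indicator `δ` of
the two weights over the base point. The leading term of the result sits at a weight determined by
`a₁ + a₂ + ε` and `a₂`, and its coefficient is `x₁^ε (x₁ + x₂)^b₁ (x₁ x₂)^b₂` up to a nonzero factor
depending only on `a₁ + ε`. These functions of a generic point are linearly independent.
-/

section LaurentPolynomials

variable {K R : Type*} [CommRing K] [Ring R] [Algebra K R]

variable (K) in
/-- The subalgebra generated by two units and their inverses; for commuting units it is the image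
of the Laurent polynomials in two variables. -/
def laurentAdjoin (A B : Rˣ) : Subalgebra K R :=
  Algebra.adjoin K {(A : R), ↑A⁻¹, (B : R), ↑B⁻¹}

variable (K) in
/-- The subalgebra of symmetric Laurent polynomials in two units `A`, `B`, generated by the
elementary symmetric polynomials `A + B`, `A * B` and the inverse of the latter. -/
def symmLaurentAdjoin (A B : Rˣ) : Subalgebra K R :=
  Algebra.adjoin K {(A + B : R), ↑(A * B), ↑(A * B)⁻¹}

variable {A B : Rˣ}

lemma coe_mem_laurentAdjoin_left : (A : R) ∈ laurentAdjoin K A B :=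
  Algebra.subset_adjoin (by simp)

lemma coe_mem_laurentAdjoin_right : (B : R) ∈ laurentAdjoin K A B :=
  Algebra.subset_adjoin (by simp)

lemma coe_inv_mem_laurentAdjoin_left : ↑A⁻¹ ∈ laurentAdjoin K A B :=
  Algebra.subset_adjoin (by simp)

lemma coe_inv_mem_laurentAdjoin_right : ↑B⁻¹ ∈ laurentAdjoin K A B :=
  Algebra.subset_adjoin (by simp)

lemma add_mem_symmLaurentAdjoin : (A + B : R) ∈ symmLaurentAdjoin K A B :=
  Algebra.subset_adjoin (by simp)

lemma coe_mul_mem_symmLaurentAdjoin : ↑(A * B) ∈ symmLaurentAdjoin K A B :=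
  Algebra.subset_adjoin (Or.inr (Or.inl rfl))

lemma coe_mul_inv_mem_symmLaurentAdjoin : ↑(A * B)⁻¹ ∈ symmLaurentAdjoin K A B :=
  Algebra.subset_adjoin (Or.inr (Or.inr rfl))

lemma symmLaurentAdjoin_le_laurentAdjoin : symmLaurentAdjoin K A B ≤ laurentAdjoin K A B := by
  refine Algebra.adjoin_le ?_
  rintro _ (rfl | rfl | rfl)
  · exact add_mem coe_mem_laurentAdjoin_left coe_mem_laurentAdjoin_right
  · rw [Units.val_mul]
    exact mul_mem coe_mem_laurentAdjoin_left coe_mem_laurentAdjoin_right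
  · rw [mul_inv_rev, Units.val_mul]
    exact mul_mem coe_inv_mem_laurentAdjoin_right coe_inv_mem_laurentAdjoin_left

lemma commute_of_mem_symmLaurentAdjoin {S s : R} (hadd : Commute S (A + B))
    (hmul : Commute S ↑(A * B)) (hs : s ∈ symmLaurentAdjoin K A B) : Commute S s := by
  have hle : symmLaurentAdjoin K A B ≤ Subalgebra.centralizer K {S} := by
    refine Algebra.adjoin_le ?_
    rintro _ (rfl | rfl | rfl) <;> rw [SetLike.mem_coe, Subalgebra.mem_centralizer_iff]
    · simpa using hadd.eq
    · simpa using hmul.eq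
    · simpa using hmul.units_inv_right.eq
  exact (Subalgebra.mem_centralizer_iff K).mp (hle hs) S rfl

lemma commute_left_of_mem_symmLaurentAdjoin (h : Commute A B) {s : R}
    (hs : s ∈ symmLaurentAdjoin K A B) : Commute (A : R) s := by
  have hAB : Commute (A : R) B := h.units_val
  refine commute_of_mem_symmLaurentAdjoin ((Commute.refl _).add_right hAB) ?_ hs
  rw [Units.val_mul]
  exact (Commute.refl _).mul_right hAB

lemma commute_of_mem_symmLaurentAdjoin_of_quadratic (h : Commute A B) {σ s : R} {c : K}
    (hσ : σ * σ = c • σ + 1) (hB : σ * A * σ = B) (hs : s ∈ symmLaurentAdjoin K A B) :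
    Commute σ s := by
  have hAB : (A * B : R) = B * A := h.units_val.eq
  have left : σ * B = c • (B : R) + A * σ := by
    rw [← hB, ← mul_assoc, ← mul_assoc, hσ]
    simp only [add_mul, smul_mul_assoc, one_mul]
  have right : B * σ = c • (B : R) + σ * A := by
    rw [← hB, mul_assoc, hσ]
    simp only [mul_add, mul_smul_comm, mul_one]
  refine commute_of_mem_symmLaurentAdjoin ?_ ?_ hs
  · rw [commute_iff_eq, mul_add, add_mul, left, right]
    abel
  · calc σ * ↑(A * B) = σ * A * (σ * A * σ) := by rw [Units.val_mul, hB, mul_assoc]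
      _ = B * A * σ := by rw [← hB]; simp only [mul_assoc]
      _ = ↑(A * B) * σ := by rw [Units.val_mul, hAB]

lemma coe_inv_right_eq_coe_mul_inv_mul : (↑B⁻¹ : R) = ↑(A * B)⁻¹ * A := by
  rw [← Units.val_mul, mul_inv_rev, inv_mul_cancel_right]

lemma coe_inv_left_eq_add_mul_coe_mul_inv_sub (h : Commute A B) :
    (↑A⁻¹ : R) = (A + B) * ↑(A * B)⁻¹ - ↑(A * B)⁻¹ * A := by
  have hA : (A : R) * ↑(A * B)⁻¹ = ↑B⁻¹ := by
    rw [← Units.val_mul, h.eq, mul_inv_rev, mul_inv_cancel_left]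
  have hB : (B : R) * ↑(A * B)⁻¹ = ↑A⁻¹ := by
    rw [← Units.val_mul, mul_inv_rev, mul_inv_cancel_left]
  rw [add_mul, hA, hB, ← coe_inv_right_eq_coe_mul_inv_mul, add_sub_cancel_left]

lemma add_mul_mul_add_mul_of_mem_symmLaurentAdjoin (h : Commute A B) {s s' u u' : R}
    (hu : u ∈ symmLaurentAdjoin K A B) (hu' : u' ∈ symmLaurentAdjoin K A B) :
    (s + s' * A) * (u + u' * A) =
      s * u - s' * u' * ↑(A * B) + (s * u' + s' * u + s' * u' * (A + B)) * A := by
  have hu := (commute_left_of_mem_symmLaurentAdjoin h hu).eq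
  have hu' := (commute_left_of_mem_symmLaurentAdjoin h hu').eq
  have hsq : (A * A : R) = (A + B) * A - ↑(A * B) := by
    rw [add_mul, h.eq, Units.val_mul, add_sub_cancel_right]
  calc (s + s' * A) * (u + u' * A)
      = s * u + s * u' * A + s' * (A * u) + s' * (A * u') * A := by noncomm_ring
    _ = s * u + s * u' * A + s' * u * A + s' * u' * (A * A) := by
      rw [hu, hu']; simp only [mul_assoc]
    _ = _ := by rw [hsq]; noncomm_ring

lemma exists_eq_add_mul_of_mem_laurentAdjoin (h : Commute A B) {b : R}
    (hb : b ∈ laurentAdjoin K A B) :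
    ∃ s ∈ symmLaurentAdjoin K A B, ∃ s' ∈ symmLaurentAdjoin K A B, b = s + s' * A := by
  have hsum := add_mem_symmLaurentAdjoin (K := K) (A := A) (B := B)
  have hprod := coe_mul_mem_symmLaurentAdjoin (K := K) (A := A) (B := B)
  have hinv := coe_mul_inv_mem_symmLaurentAdjoin (K := K) (A := A) (B := B)
  induction hb using Algebra.adjoin_induction with
  | mem x hx =>
    obtain rfl | rfl | rfl | rfl := hx
    · exact ⟨0, zero_mem _, 1, one_mem _, by simp⟩
    · refine ⟨_, mul_mem hsum hinv, _, neg_mem hinv, ?_⟩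
      rw [neg_mul, ← sub_eq_add_neg, coe_inv_left_eq_add_mul_coe_mul_inv_sub h]
    · exact ⟨_, hsum, -1, neg_mem (one_mem _), by simp⟩
    · exact ⟨0, zero_mem _, _, hinv, by rw [zero_add, coe_inv_right_eq_coe_mul_inv_mul]⟩
  | algebraMap r => exact ⟨_, algebraMap_mem _ r, 0, zero_mem _, by simp⟩
  | add x y _ _ hx hy =>
    obtain ⟨s, hs, s', hs', rfl⟩ := hx
    obtain ⟨u, hu, u', hu', rfl⟩ := hy
    exact ⟨s + u, add_mem hs hu, s' + u', add_mem hs' hu', by rw [add_mul]; abel⟩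
  | mul x y _ _ hx hy =>
    obtain ⟨s, hs, s', hs', rfl⟩ := hx
    obtain ⟨u, hu, u', hu', rfl⟩ := hy
    refine ⟨_, ?_, _, ?_, add_mul_mul_add_mul_of_mem_symmLaurentAdjoin h hu hu'⟩
    · exact sub_mem (mul_mem hs hu) (mul_mem (mul_mem hs' hu') hprod)
    · exact add_mem (add_mem (mul_mem hs hu') (mul_mem hs' hu)) (mul_mem (mul_mem hs' hu') hsum)

lemma adjoin_insert_unit_eq_span {x : R} {u : Rˣ} (h : Commute x u) :
    Subalgebra.toSubmodule (Algebra.adjoin K {x, (u : R), ↑u⁻¹}) =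
      Submodule.span K (Set.range fun i : ℕ × ℤ => x ^ i.1 * (↑(u ^ i.2) : R)) := by
  rw [Algebra.adjoin_eq_span]
  congr 1
  ext y
  constructor
  · intro hy
    induction hy using Submonoid.closure_induction with
    | mem y hy =>
      obtain rfl | rfl | rfl := hy
      · exact ⟨(1, 0), by simp⟩
      · exact ⟨(0, 1), by simp⟩
      · exact ⟨(0, -1), by simp⟩
    | one => exact ⟨(0, 0), by simp⟩
    | mul y z _ _ hy hz =>
      obtain ⟨⟨i, m⟩, rfl⟩ := hy
      obtain ⟨⟨j, n⟩, rfl⟩ := hz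
      have hcomm : Commute (x ^ j) (↑(u ^ m) : R) := (h.units_zpow_right m).pow_left j
      refine ⟨(i + j, m + n), ?_⟩
      simp only [pow_add, zpow_add, Units.val_mul]
      exact hcomm.mul_mul_mul_comm _ _
  · rintro ⟨⟨i, n⟩, rfl⟩
    refine mul_mem (pow_mem (Submonoid.subset_closure (by simp)) i) ?_
    cases n with
    | ofNat n => simpa using pow_mem (Submonoid.subset_closure (by simp)) n
    | negSucc n =>
      rw [zpow_negSucc, ← inv_pow, Units.val_pow_eq_pow_val]
      exact pow_mem (Submonoid.subset_closure (by simp)) _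

lemma commute_add_mul_of_commute (h : Commute A B) : Commute (A + B : R) ↑(A * B) := by
  have hAB : Commute (A : R) B := h.units_val
  rw [Units.val_mul]
  exact ((Commute.refl _).mul_right hAB).add_left (hAB.symm.mul_right (Commute.refl _))

lemma symmLaurentAdjoin_toSubmodule (h : Commute A B) :
    Subalgebra.toSubmodule (symmLaurentAdjoin K A B) =
      Submodule.span K (Set.range fun i : ℕ × ℤ => (A + B : R) ^ i.1 * (↑((A * B) ^ i.2) : R)) :=
  adjoin_insert_unit_eq_span (commute_add_mul_of_commute h)

lemma add_pow_mul_mul_zpow_mem_symmLaurentAdjoin (h : Commute A B) (a : ℕ) (b : ℤ) :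
    (A + B : R) ^ a * (↑((A * B) ^ b) : R) ∈ symmLaurentAdjoin K A B := by
  rw [← Subalgebra.mem_toSubmodule, symmLaurentAdjoin_toSubmodule h]
  exact Submodule.subset_span ⟨(a, b), rfl⟩

end LaurentPolynomials

section Stabilizer

variable {K R : Type*} [CommRing K] [Ring R] [Algebra K R]

lemma exists_semiconjBy_of_mem_adjoin {s : Set R} {P a : R}
    (hs : ∀ a ∈ s, ∃ a' ∈ Algebra.adjoin K s, SemiconjBy P a' a) (ha : a ∈ Algebra.adjoin K s) :
    ∃ a' ∈ Algebra.adjoin K s, SemiconjBy P a' a := by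
  induction ha using Algebra.adjoin_induction with
  | mem a ha => exact hs a ha
  | algebraMap r => exact ⟨_, algebraMap_mem _ r, Algebra.commute_algebraMap_right r P⟩
  | add a b _ _ ha hb =>
    obtain ⟨a', ha', ha⟩ := ha
    obtain ⟨b', hb', hb⟩ := hb
    exact ⟨_, add_mem ha' hb', ha.add_right hb⟩
  | mul a b _ _ ha hb =>
    obtain ⟨a', ha', ha⟩ := ha
    obtain ⟨b', hb', hb⟩ := hb
    exact ⟨_, mul_mem ha' hb', ha.mul_right hb⟩

/-- The largest subalgebra under whose right multiplication the submodule `N` of `R` is stable. -/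
def rightStabilizer (N : Submodule K R) : Subalgebra K R where
  carrier := {r | ∀ n ∈ N, n * r ∈ N}
  mul_mem' hr hs n hn := by
    rw [← mul_assoc]
    exact hs _ (hr n hn)
  add_mem' hr hs n hn := by
    rw [mul_add]
    exact add_mem (hr n hn) (hs n hn)
  algebraMap_mem' c n hn := by
    rw [← Algebra.commutes, ← Algebra.smul_def]
    exact N.smul_mem c hn

/-- The `(S, L)`-subbimodule of `R` generated by `G`, as a `K`-submodule. -/
def bimoduleSpan (S : Subalgebra K R) (G : Set R) (L : Subalgebra K R) : Submodule K R :=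
  Subalgebra.toSubmodule S * (Submodule.span K G * Subalgebra.toSubmodule L)

variable {S L : Subalgebra K R} {G : Set R}

lemma mul_mul_mem_bimoduleSpan {s g b : R} (hs : s ∈ S) (hg : g ∈ G) (hb : b ∈ L) :
    s * (g * b) ∈ bimoduleSpan S G L :=
  Submodule.mul_mem_mul hs (Submodule.mul_mem_mul (Submodule.subset_span hg) hb)

lemma mul_mem_bimoduleSpan_of_left {s n : R} (hs : s ∈ S) (hn : n ∈ bimoduleSpan S G L) :
    s * n ∈ bimoduleSpan S G L := by
  have hmem : s * n ∈ Subalgebra.toSubmodule S * bimoduleSpan S G L := Submodule.mul_mem_mul hs hn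
  rwa [bimoduleSpan, ← mul_assoc, S.isIdempotentElem_toSubmodule.eq] at hmem

lemma bimoduleSpan_le {J : Submodule K R} (h : ∀ s ∈ S, ∀ g ∈ G, ∀ b ∈ L, s * (g * b) ∈ J) :
    bimoduleSpan S G L ≤ J := by
  refine Submodule.mul_le.mpr fun s hs x hx => ?_
  have hle : Submodule.span K G * Subalgebra.toSubmodule L ≤ J.comap (LinearMap.mulLeft K s) := by
    refine Submodule.mul_le.mpr fun g hg b hb => ?_
    have hle : Submodule.span K G ≤
        J.comap (LinearMap.mulLeft K s ∘ₗ LinearMap.mulRight K b) :=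
      Submodule.span_le.mpr fun g hg => h s hs g hg b hb
    exact hle hg
  exact hle hx

lemma mem_rightStabilizer_bimoduleSpan {r : R}
    (h : ∀ g ∈ G, ∀ b ∈ L, g * b * r ∈ bimoduleSpan S G L) :
    r ∈ rightStabilizer (bimoduleSpan S G L) := by
  suffices hle : bimoduleSpan S G L ≤ (bimoduleSpan S G L).comap (LinearMap.mulRight K r) from
    fun n hn => hle hn
  refine bimoduleSpan_le fun s hs g hg b hb => ?_
  rw [Submodule.mem_comap, LinearMap.mulRight_apply, mul_assoc]
  exact mul_mem_bimoduleSpan_of_left hs (h g hg b hb)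

lemma mul_mul_mem_of_mem_span {A B : Set R} {J : Submodule K R} {w s u : R}
    (h : ∀ a ∈ A, ∀ b ∈ B, a * w * b ∈ J) (hs : s ∈ Submodule.span K A)
    (hu : u ∈ Submodule.span K B) : s * w * u ∈ J := by
  have hle : Submodule.span K A * Submodule.span K {w} * Submodule.span K B ≤ J := by
    simp only [Submodule.span_mul_span, Submodule.span_le, Set.mul_singleton]
    rintro _ ⟨_, ⟨a, ha, rfl⟩, b, hb, rfl⟩
    exact h a ha b hb
  have hw := Submodule.mem_span_singleton_self (R := K) w
  exact hle (Submodule.mul_mem_mul (Submodule.mul_mem_mul hs hw) hu)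

end Stabilizer

section Swap

variable {K R : Type*} [Field K] [Ring R] [Algebra K R]

lemma semiconjBy_smul_of_mul_eq_smul {P : R} {x y : R} {c : K} (hc : c ≠ 0)
    (h : P * y = c • (x * P)) : SemiconjBy P (c⁻¹ • y) x := by
  rw [SemiconjBy, mul_smul_comm, h, inv_smul_smul₀ hc]

lemma semiconjBy_smul_inv_of_mul_eq_smul {P : R} {x y : Rˣ} {c : K}
    (h : P * y = c • (x * P)) : SemiconjBy P (c • ↑y⁻¹) ↑x⁻¹ := by
  rw [SemiconjBy, Units.eq_inv_mul_iff_mul_eq, mul_smul_comm, mul_smul_comm, ← mul_assoc,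
    ← smul_mul_assoc, ← h, Units.mul_inv_cancel_right]

lemma exists_semiconjBy_of_mem_laurentAdjoin {A B : Rˣ} {P b : R} {c d : K} (hc : c ≠ 0)
    (hd : d ≠ 0) (hA : P * A = c • (B * P)) (hB : P * B = d • (A * P))
    (hb : b ∈ laurentAdjoin K A B) : ∃ b' ∈ laurentAdjoin K A B, SemiconjBy P b' b := by
  refine exists_semiconjBy_of_mem_adjoin ?_ hb
  rintro _ (rfl | rfl | rfl | rfl)
  · exact ⟨_, Subalgebra.smul_mem _ coe_mem_laurentAdjoin_right _,
      semiconjBy_smul_of_mul_eq_smul hd hB⟩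
  · exact ⟨_, Subalgebra.smul_mem _ coe_inv_mem_laurentAdjoin_right _,
      semiconjBy_smul_inv_of_mul_eq_smul hB⟩
  · exact ⟨_, Subalgebra.smul_mem _ coe_mem_laurentAdjoin_left _,
      semiconjBy_smul_of_mul_eq_smul hc hA⟩
  · exact ⟨_, Subalgebra.smul_mem _ coe_inv_mem_laurentAdjoin_left _,
      semiconjBy_smul_inv_of_mul_eq_smul hA⟩

end Swap

/-- A realization of the double affine Hecke algebra `H_{t,q}` of type GL₂ in an algebra `R`: units
of `R` standing for `T`, `X₁` and `π = T⁻¹ Y₁`. In terms of these the defining relations of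
`H_{t,q}` say that `X₁` and `X₂ = T X₁ T` commute, that conjugation by `π` swaps them up to the
factor `q²`, and that `π² = Y₁ Y₂` commutes with `T`. -/
structure DAHARealization {K : Type*} [Field K] (q t : K) (R : Type*) [Ring R] [Algebra K R] where
  T : Rˣ
  X₁ : Rˣ
  π : Rˣ
  hecke : (T * T : R) = (t - t⁻¹) • (T : R) + 1
  commute_X : Commute X₁ (T * X₁ * T)
  X₁_mul_π : X₁ * π = π * (T * X₁ * T)
  π_mul_X₁ : (π * X₁ : R) = q ^ 2 • (T * X₁ * T * π : R)
  commute_π_sq : Commute (π * π) T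

namespace DAHARealization

variable {K R : Type*} [Field K] [Ring R] [Algebra K R] {q t : K} (D : DAHARealization q t R)

/-- The element `X₂ = T X₁ T`. -/
def X₂ : Rˣ := D.T * D.X₁ * D.T

/-- The element `Y₁ = T π`. -/
def Y₁ : Rˣ := D.T * D.π

/-- The element `Y₂ = T⁻¹ Y₁ T⁻¹ = π T⁻¹`. -/
def Y₂ : Rˣ := D.π * D.T⁻¹

/-- The symmetrizing idempotent `(1 + t T) / (1 + t²)`. -/
def e : R := (1 + t ^ 2)⁻¹ • (1 + t • (D.T : R))

/-- The element `t⁻² Y₁ X₁ + Y₂ X₂`. -/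
def W : R := t⁻¹ ^ 2 • (D.Y₁ * D.X₁ : R) + D.Y₂ * D.X₂

/-- The spherical PBW family
`e (Y₁ + Y₂)^a₁ (Y₁ Y₂)^a₂ W^ε (X₁ + X₂)^b₁ (X₁ X₂)^b₂ e`, indexed by `(a₁, a₂, ε, b₁, b₂)`. -/
def pbw (i : ℕ × ℤ × Fin 2 × ℕ × ℤ) : R :=
  D.e * ((D.Y₁ + D.Y₂ : R) ^ i.1 * ↑((D.Y₁ * D.Y₂) ^ i.2.1) * D.W ^ (i.2.2.1 : ℕ) *
    (D.X₁ + D.X₂ : R) ^ i.2.2.2.1 * ↑((D.X₁ * D.X₂) ^ i.2.2.2.2)) * D.e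

/-- The symmetric Laurent polynomials in `X₁` and `X₂`. -/
abbrev symmX : Subalgebra K R := symmLaurentAdjoin K D.X₁ D.X₂

/-- The symmetric Laurent polynomials in `Y₁` and `Y₂`. -/
abbrev symmY : Subalgebra K R := symmLaurentAdjoin K D.Y₁ D.Y₂

/-- The subalgebra of `R` generated by the realization. -/
def generated : Subalgebra K R :=
  Algebra.adjoin K {(D.T : R), ↑D.T⁻¹, (D.X₁ : R), ↑D.X₁⁻¹, (D.π : R), ↑D.π⁻¹}

lemma commute_X₁_X₂ : Commute D.X₁ D.X₂ := D.commute_X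

lemma coe_inv_T : (↑D.T⁻¹ : R) = D.T - (t - t⁻¹) • 1 := by
  refine Units.inv_eq_of_mul_eq_one_right ?_
  rw [mul_sub, D.hecke, mul_smul_comm, mul_one, add_sub_cancel_left]

lemma Y₁_mul_Y₂ : D.Y₁ * D.Y₂ = D.π * D.π := by
  rw [Y₁, Y₂, mul_assoc, ← mul_assoc D.π, ← mul_assoc, ← D.commute_π_sq.eq, mul_inv_cancel_right]

lemma commute_Y₁_Y₂ : Commute D.Y₁ D.Y₂ := by
  rw [commute_iff_eq, Y₁_mul_Y₂, Y₁, Y₂, mul_assoc, inv_mul_cancel_left]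

lemma coe_X₁_mul_coe_T : (D.X₁ * D.T : R) = D.T * D.X₂ - (t - t⁻¹) • (D.X₂ : R) := by
  have h : D.X₁ * D.T = D.T⁻¹ * D.X₂ := by rw [X₂, mul_assoc, inv_mul_cancel_left]
  rw [← Units.val_mul, h, Units.val_mul, coe_inv_T, sub_mul, smul_mul_assoc, one_mul]

lemma commute_T_of_mem_symmX {s : R} (hs : s ∈ D.symmX) : Commute (D.T : R) s :=
  commute_of_mem_symmLaurentAdjoin_of_quadratic D.commute_X₁_X₂ D.hecke (by simp [X₂]) hs

lemma commute_T_of_mem_symmY {s : R} (hs : s ∈ D.symmY) : Commute (D.T : R) s := by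
  have hquad : (↑D.T⁻¹ * ↑D.T⁻¹ : R) = (-(t - t⁻¹)) • (↑D.T⁻¹ : R) + 1 := by
    nth_rw 1 [coe_inv_T]
    rw [sub_mul, Units.mul_inv, smul_mul_assoc, one_mul, neg_smul, sub_eq_neg_add]
  have hY : (↑D.T⁻¹ * D.Y₁ * ↑D.T⁻¹ : R) = D.Y₂ := by simp [Y₁, Y₂]
  have h : Commute (↑D.T⁻¹ : R) s :=
    commute_of_mem_symmLaurentAdjoin_of_quadratic D.commute_Y₁_Y₂ hquad hY hs
  exact Commute.units_inv_left_iff.mp h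

lemma commute_e {s : R} (hs : Commute (D.T : R) s) : Commute D.e s :=
  ((Commute.one_left s).add_left (hs.smul_left t)).smul_left _

lemma commute_e_of_mem_symmX {s : R} (hs : s ∈ D.symmX) : Commute D.e s :=
  D.commute_e (D.commute_T_of_mem_symmX hs)

lemma commute_e_of_mem_symmY {s : R} (hs : s ∈ D.symmY) : Commute D.e s :=
  D.commute_e (D.commute_T_of_mem_symmY hs)

variable (ht : t ≠ 0)
include ht

lemma coe_T_mul_e : D.T * D.e = t • D.e := by
  have hT : (D.T : R) * (1 + t • (D.T : R)) = t • (1 + t • (D.T : R)) := by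
    have hscalar : 1 + t * (t - t⁻¹) = t * t := by field_simp; ring
    calc (D.T : R) * (1 + t • (D.T : R)) = (1 + t * (t - t⁻¹)) • (D.T : R) + t • (1 : R) := by
          rw [mul_add, mul_one, mul_smul_comm, D.hecke]; module
      _ = t • (1 + t • (D.T : R)) := by rw [hscalar]; module
  rw [e, mul_smul_comm, hT, smul_comm]

lemma e_mul_coe_T : D.e * D.T = t • D.e := by
  rw [(D.commute_e (Commute.refl _)).eq, D.coe_T_mul_e ht]

lemma e_mul_e (ht2 : 1 + t ^ 2 ≠ 0) : D.e * D.e = D.e := by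
  nth_rw 1 [e]
  calc (1 + t ^ 2)⁻¹ • (1 + t • (D.T : R)) * D.e = (1 + t ^ 2)⁻¹ • (1 + t ^ 2) • D.e := by
        rw [smul_mul_assoc, add_mul, one_mul, smul_mul_assoc, D.coe_T_mul_e ht]; module
    _ = D.e := inv_smul_smul₀ ht2 _

lemma Y₁_add_Y₂_mul_e : (D.Y₁ + D.Y₂ : R) * D.e = D.e * D.π * D.T + t⁻¹ • (D.e * D.π) := by
  rw [← (D.commute_e_of_mem_symmY add_mem_symmLaurentAdjoin).eq, Y₁, Y₂, Units.val_mul,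
    Units.val_mul, mul_add, ← mul_assoc, D.e_mul_coe_T ht, D.coe_inv_T, mul_sub, mul_sub,
    mul_smul_comm, mul_smul_comm, mul_one, mul_assoc D.e, smul_mul_assoc]
  module

lemma Y₁_add_Y₂_mul_e_eq_smul (ht2 : 1 + t ^ 2 ≠ 0) :
    (D.Y₁ + D.Y₂ : R) * D.e = (t + t⁻¹) • (D.e * D.π * D.e) := by
  calc (D.Y₁ + D.Y₂ : R) * D.e = (D.Y₁ + D.Y₂ : R) * D.e * D.e := by
        rw [mul_assoc, D.e_mul_e ht ht2]
    _ = (t + t⁻¹) • (D.e * D.π * D.e) := by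
        rw [D.Y₁_add_Y₂_mul_e ht, add_mul, mul_assoc _ (D.T : R), D.coe_T_mul_e ht, mul_smul_comm,
          smul_mul_assoc, add_smul]

lemma X₁_add_X₂_mul_e (ht2 : 1 + t ^ 2 ≠ 0) :
    (D.X₁ + D.X₂ : R) * D.e = (1 + t ^ 2) • (D.e * D.X₁ * D.e) := by
  have hX₂ : D.e * D.X₂ * D.e = t ^ 2 • (D.e * D.X₁ * D.e) := by
    rw [X₂, Units.val_mul, Units.val_mul, ← mul_assoc, ← mul_assoc, D.e_mul_coe_T ht,
      mul_assoc _ (D.T : R), D.coe_T_mul_e ht, mul_smul_comm, smul_mul_assoc, smul_mul_assoc,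
      smul_smul, sq]
  calc (D.X₁ + D.X₂ : R) * D.e = (D.X₁ + D.X₂ : R) * D.e * D.e := by
        rw [mul_assoc, D.e_mul_e ht ht2]
    _ = D.e * D.X₁ * D.e + D.e * D.X₂ * D.e := by
        rw [← (D.commute_e_of_mem_symmX add_mem_symmLaurentAdjoin).eq, mul_add, add_mul]
    _ = (1 + t ^ 2) • (D.e * D.X₁ * D.e) := by rw [hX₂, add_smul, one_smul]

lemma e_mul_W_mul_e : D.e * D.W * D.e = (t + t⁻¹) • (D.e * D.π * D.X₁ * D.e) := by
  have hY₁X₁ : D.e * (D.Y₁ * D.X₁) * D.e = t • (D.e * D.π * D.X₁ * D.e) := by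
    rw [Y₁, Units.val_mul, mul_assoc (D.T : R), ← mul_assoc D.e, D.e_mul_coe_T ht]
    simp only [smul_mul_assoc, mul_assoc]
  have hY₂X₂ : D.e * (D.Y₂ * D.X₂) * D.e = t • (D.e * D.π * D.X₁ * D.e) := by
    have h : D.Y₂ * D.X₂ = D.π * D.X₁ * D.T := by
      rw [Y₂, X₂, mul_assoc, mul_assoc, mul_assoc, inv_mul_cancel_left]
    rw [← Units.val_mul, h, mul_assoc, Units.val_mul, mul_assoc _ (D.T : R), D.coe_T_mul_e ht,
      mul_smul_comm, mul_smul_comm, Units.val_mul]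
    simp only [mul_assoc]
  have hscalar : t⁻¹ ^ 2 * t + t = t + t⁻¹ := by field_simp; ring
  rw [W, mul_add, add_mul, mul_smul_comm, smul_mul_assoc, hY₁X₁, hY₂X₂, smul_smul, ← add_smul,
    hscalar]

end DAHARealization

section Spanning

lemma add_inv_ne_zero_of_one_add_sq_ne_zero {K : Type*} [Field K] {t : K} (ht : t ≠ 0)
    (ht2 : 1 + t ^ 2 ≠ 0) : t + t⁻¹ ≠ 0 := by
  have h : t + t⁻¹ = (1 + t ^ 2) * t⁻¹ := by field_simp; ring
  rw [h]
  exact mul_ne_zero ht2 (inv_ne_zero ht)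

namespace DAHARealization

variable {K R : Type*} [Field K] [Ring R] [Algebra K R] {q t : K} (D : DAHARealization q t R)

lemma π_mul_X₁_eq_smul : (D.π * D.X₁ : R) = q ^ 2 • (D.X₂ * D.π : R) := by
  simpa [X₂] using D.π_mul_X₁

-- The scalar `1` here and in the next lemma fits `exists_semiconjBy_of_mem_laurentAdjoin`.
lemma π_mul_X₂ : (D.π * D.X₂ : R) = (1 : K) • (D.X₁ * D.π : R) := by
  rw [one_smul, ← Units.val_mul, ← Units.val_mul, D.X₁_mul_π, X₂]

lemma inv_π_mul_X₁ : (↑D.π⁻¹ * D.X₁ : R) = (1 : K) • (D.X₂ * ↑D.π⁻¹ : R) := by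
  rw [Units.inv_mul_eq_iff_eq_mul, mul_smul_comm, ← mul_assoc, D.π_mul_X₂, one_smul, one_smul,
    Units.mul_inv_cancel_right]

lemma inv_π_mul_X₂ (hq : q ≠ 0) :
    (↑D.π⁻¹ * D.X₂ : R) = (q ^ 2)⁻¹ • (D.X₁ * ↑D.π⁻¹ : R) := by
  rw [Units.inv_mul_eq_iff_eq_mul, mul_smul_comm, ← mul_assoc, D.π_mul_X₁_eq_smul,
    smul_mul_assoc, inv_smul_smul₀ (pow_ne_zero 2 hq), Units.mul_inv_cancel_right]

lemma exists_semiconjBy_π (hq : q ≠ 0) {b : R} (hb : b ∈ laurentAdjoin K D.X₁ D.X₂) :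
    ∃ b' ∈ laurentAdjoin K D.X₁ D.X₂, SemiconjBy (D.π : R) b' b :=
  exists_semiconjBy_of_mem_laurentAdjoin (pow_ne_zero 2 hq) one_ne_zero
    D.π_mul_X₁_eq_smul D.π_mul_X₂ hb

lemma exists_semiconjBy_inv_π (hq : q ≠ 0) {b : R} (hb : b ∈ laurentAdjoin K D.X₁ D.X₂) :
    ∃ b' ∈ laurentAdjoin K D.X₁ D.X₂, SemiconjBy (↑D.π⁻¹ : R) b' b :=
  exists_semiconjBy_of_mem_laurentAdjoin one_ne_zero (inv_ne_zero (pow_ne_zero 2 hq))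
    D.inv_π_mul_X₁ (D.inv_π_mul_X₂ hq) hb

lemma exists_mul_T_eq {b : R} (hb : b ∈ laurentAdjoin K D.X₁ D.X₂) :
    ∃ c ∈ laurentAdjoin K D.X₁ D.X₂, ∃ d ∈ laurentAdjoin K D.X₁ D.X₂, b * D.T = D.T * c + d := by
  obtain ⟨s, hs, s', hs', rfl⟩ := exists_eq_add_mul_of_mem_laurentAdjoin D.commute_X₁_X₂ hb
  have hmem := symmLaurentAdjoin_le_laurentAdjoin (K := K) (A := D.X₁) (B := D.X₂)
  have hX₂ : s' * (D.X₂ : R) ∈ laurentAdjoin K D.X₁ D.X₂ :=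
    mul_mem (hmem hs') coe_mem_laurentAdjoin_right
  refine ⟨s + s' * D.X₂, add_mem (hmem hs) hX₂, -(t - t⁻¹) • (s' * D.X₂),
    Subalgebra.smul_mem _ hX₂ _, ?_⟩
  calc (s + s' * D.X₁) * D.T = s * D.T + s' * (D.X₁ * D.T) := by rw [add_mul, mul_assoc]
    _ = s * D.T + (s' * D.T) * D.X₂ + -(t - t⁻¹) • (s' * D.X₂) := by
      rw [D.coe_X₁_mul_coe_T, mul_sub, mul_smul_comm, neg_smul, ← mul_assoc]; abel
    _ = D.T * (s + s' * D.X₂) + -(t - t⁻¹) • (s' * D.X₂) := by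
      rw [← (D.commute_T_of_mem_symmX hs).eq, ← (D.commute_T_of_mem_symmX hs').eq, mul_add,
        mul_assoc]

lemma coe_Y₁_mul_Y₂ : (↑(D.Y₁ * D.Y₂) : R) = D.π * D.π := by
  rw [Y₁_mul_Y₂, Units.val_mul]

lemma e_mul_π_mul_π : D.e * D.π * D.π = ↑(D.Y₁ * D.Y₂) * D.e := by
  rw [mul_assoc, ← coe_Y₁_mul_Y₂, (D.commute_e_of_mem_symmY coe_mul_mem_symmLaurentAdjoin).eq]

lemma e_mul_inv_π : D.e * ↑D.π⁻¹ = ↑(D.Y₁ * D.Y₂)⁻¹ * (D.e * D.π) := by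
  rw [← mul_assoc, ← (D.commute_e_of_mem_symmY coe_mul_inv_mem_symmLaurentAdjoin).eq, mul_assoc,
    ← Units.val_mul, Y₁_mul_Y₂, mul_inv_rev, inv_mul_cancel_right]

/-- The `(symmY, K[X₁^±¹, X₂^±¹])`-bimodule generated by `e` and `e π`. It contains `e H_{t,q}`. -/
def bimodule : Submodule K R :=
  bimoduleSpan D.symmY {D.e, D.e * D.π} (laurentAdjoin K D.X₁ D.X₂)

variable {D}

lemma symmY_mul_e_mem_bimodule {s b : R} (hs : s ∈ D.symmY) (hb : b ∈ laurentAdjoin K D.X₁ D.X₂) :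
    s * (D.e * b) ∈ D.bimodule :=
  mul_mul_mem_bimoduleSpan hs (Set.mem_insert _ _) hb

lemma symmY_mul_e_mul_π_mem_bimodule {s b : R} (hs : s ∈ D.symmY)
    (hb : b ∈ laurentAdjoin K D.X₁ D.X₂) : s * (D.e * D.π * b) ∈ D.bimodule :=
  mul_mul_mem_bimoduleSpan hs (Set.mem_insert_of_mem _ rfl) hb

lemma e_mul_mem_bimodule {b : R} (hb : b ∈ laurentAdjoin K D.X₁ D.X₂) : D.e * b ∈ D.bimodule := by
  simpa using symmY_mul_e_mem_bimodule (one_mem _) hb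

lemma e_mem_bimodule : D.e ∈ D.bimodule := by
  simpa using e_mul_mem_bimodule (D := D) (b := 1) (one_mem _)

lemma e_mul_π_mul_mem_bimodule {b : R} (hb : b ∈ laurentAdjoin K D.X₁ D.X₂) :
    D.e * D.π * b ∈ D.bimodule := by
  simpa using symmY_mul_e_mul_π_mem_bimodule (one_mem _) hb

lemma mem_rightStabilizer_bimodule {r : R}
    (he : ∀ b ∈ laurentAdjoin K D.X₁ D.X₂, D.e * b * r ∈ D.bimodule)
    (heπ : ∀ b ∈ laurentAdjoin K D.X₁ D.X₂, D.e * D.π * b * r ∈ D.bimodule) :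
    r ∈ rightStabilizer D.bimodule := by
  refine mem_rightStabilizer_bimoduleSpan ?_
  rintro _ (rfl | rfl)
  exacts [he, heπ]

lemma mem_rightStabilizer_bimodule_of_mem_laurentAdjoin {a : R}
    (ha : a ∈ laurentAdjoin K D.X₁ D.X₂) : a ∈ rightStabilizer D.bimodule := by
  refine mem_rightStabilizer_bimodule (fun b hb => ?_) fun b hb => ?_
  · rw [mul_assoc]
    exact e_mul_mem_bimodule (mul_mem hb ha)
  · rw [mul_assoc]
    exact e_mul_π_mul_mem_bimodule (mul_mem hb ha)

lemma coe_T_mem_rightStabilizer_bimodule (ht : t ≠ 0) :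
    (D.T : R) ∈ rightStabilizer D.bimodule := by
  refine mem_rightStabilizer_bimodule (fun b hb => ?_) fun b hb => ?_ <;>
    obtain ⟨c, hc, d, hd, h⟩ := D.exists_mul_T_eq hb
  · rw [mul_assoc, h, mul_add, ← mul_assoc, D.e_mul_coe_T ht, smul_mul_assoc]
    exact add_mem (Submodule.smul_mem _ _ (e_mul_mem_bimodule hc)) (e_mul_mem_bimodule hd)
  · have heπT : D.e * D.π * D.T = (D.Y₁ + D.Y₂ : R) * D.e - t⁻¹ • (D.e * D.π) :=
      eq_sub_of_add_eq (D.Y₁_add_Y₂_mul_e ht).symm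
    rw [mul_assoc, h, mul_add, ← mul_assoc, heπT, sub_mul, smul_mul_assoc, mul_assoc _ D.e]
    exact add_mem (sub_mem (symmY_mul_e_mem_bimodule add_mem_symmLaurentAdjoin hc)
      (Submodule.smul_mem _ _ (e_mul_π_mul_mem_bimodule hc))) (e_mul_π_mul_mem_bimodule hd)

lemma coe_π_mem_rightStabilizer_bimodule (hq : q ≠ 0) :
    (D.π : R) ∈ rightStabilizer D.bimodule := by
  refine mem_rightStabilizer_bimodule (fun b hb => ?_) fun b hb => ?_ <;>
    obtain ⟨b', hb', h⟩ := D.exists_semiconjBy_π hq hb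
  · rw [mul_assoc, ← h.eq, ← mul_assoc]
    exact e_mul_π_mul_mem_bimodule hb'
  · rw [mul_assoc, ← h.eq, ← mul_assoc, D.e_mul_π_mul_π, mul_assoc]
    exact symmY_mul_e_mem_bimodule coe_mul_mem_symmLaurentAdjoin hb'

lemma coe_inv_π_mem_rightStabilizer_bimodule (hq : q ≠ 0) :
    ↑D.π⁻¹ ∈ rightStabilizer D.bimodule := by
  refine mem_rightStabilizer_bimodule (fun b hb => ?_) fun b hb => ?_ <;>
    obtain ⟨b', hb', h⟩ := D.exists_semiconjBy_inv_π hq hb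
  · rw [mul_assoc, ← h.eq, ← mul_assoc, D.e_mul_inv_π, mul_assoc]
    exact symmY_mul_e_mul_π_mem_bimodule coe_mul_inv_mem_symmLaurentAdjoin hb'
  · rw [mul_assoc, ← h.eq, ← mul_assoc, Units.mul_inv_cancel_right]
    exact e_mul_mem_bimodule hb'

lemma generated_le_rightStabilizer_bimodule (hq : q ≠ 0) (ht : t ≠ 0) :
    D.generated ≤ rightStabilizer D.bimodule := by
  have hT := coe_T_mem_rightStabilizer_bimodule (D := D) ht
  refine Algebra.adjoin_le ?_
  rintro _ (rfl | rfl | rfl | rfl | rfl | rfl)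
  · exact hT
  · rw [coe_inv_T]
    exact sub_mem hT (Subalgebra.smul_mem _ (one_mem _) _)
  · exact mem_rightStabilizer_bimodule_of_mem_laurentAdjoin coe_mem_laurentAdjoin_left
  · exact mem_rightStabilizer_bimodule_of_mem_laurentAdjoin coe_inv_mem_laurentAdjoin_left
  · exact coe_π_mem_rightStabilizer_bimodule hq
  · exact coe_inv_π_mem_rightStabilizer_bimodule hq

lemma e_mul_mem_bimodule_of_mem_generated (hq : q ≠ 0) (ht : t ≠ 0) {y : R}
    (hy : y ∈ D.generated) : D.e * y ∈ D.bimodule :=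
  generated_le_rightStabilizer_bimodule hq ht hy _ e_mem_bimodule

lemma e_mul_mul_mul_e_mem_span_pbw {ε : Fin 2} {s u : R} (hs : s ∈ D.symmY) (hu : u ∈ D.symmX) :
    D.e * (s * D.W ^ (ε : ℕ) * u) * D.e ∈ Submodule.span K (Set.range D.pbw) := by
  have hs : s ∈ Subalgebra.toSubmodule D.symmY := hs
  have hu : u ∈ Subalgebra.toSubmodule D.symmX := hu
  rw [symmLaurentAdjoin_toSubmodule D.commute_Y₁_Y₂] at hs
  rw [symmLaurentAdjoin_toSubmodule D.commute_X₁_X₂] at hu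
  suffices h : s * D.W ^ (ε : ℕ) * u ∈ (Submodule.span K (Set.range D.pbw)).comap
      (LinearMap.mulRight K D.e ∘ₗ LinearMap.mulLeft K D.e) from h
  refine mul_mul_mem_of_mem_span ?_ hs hu
  rintro _ ⟨⟨a₁, a₂⟩, rfl⟩ _ ⟨⟨b₁, b₂⟩, rfl⟩
  refine Submodule.subset_span ⟨(a₁, a₂, ε, b₁, b₂), ?_⟩
  simp only [pbw, LinearMap.comp_apply, LinearMap.mulLeft_apply, LinearMap.mulRight_apply,
    mul_assoc]

lemma e_mul_mul_W_pow_mul_mul_e {s u : R} (hs : s ∈ D.symmY) (hu : u ∈ D.symmX) (n : ℕ) :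
    D.e * (s * D.W ^ n * u) * D.e = s * (D.e * D.W ^ n * D.e) * u := by
  calc D.e * (s * D.W ^ n * u) * D.e = D.e * s * D.W ^ n * (u * D.e) := by simp only [mul_assoc]
    _ = s * D.e * D.W ^ n * (D.e * u) := by
        rw [(D.commute_e_of_mem_symmX hu).eq, (D.commute_e_of_mem_symmY hs).eq]
    _ = s * (D.e * D.W ^ n * D.e) * u := by simp only [mul_assoc]

lemma mul_e_mul_W_pow_mul_e_mul_mem_span_pbw (ε : Fin 2) {s u : R}
    (hs : s ∈ D.symmY) (hu : u ∈ D.symmX) :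
    s * (D.e * D.W ^ (ε : ℕ) * D.e) * u ∈ Submodule.span K (Set.range D.pbw) := by
  rw [← e_mul_mul_W_pow_mul_mul_e hs hu]
  exact e_mul_mul_mul_e_mem_span_pbw hs hu

lemma mul_e_mul_mem_span_pbw (ht : t ≠ 0) (ht2 : 1 + t ^ 2 ≠ 0) {s u : R}
    (hs : s ∈ D.symmY) (hu : u ∈ D.symmX) : s * D.e * u ∈ Submodule.span K (Set.range D.pbw) := by
  simpa [D.e_mul_e ht ht2] using mul_e_mul_W_pow_mul_e_mul_mem_span_pbw 0 hs hu

lemma mul_e_mul_X₁_mul_e_mul_mem_span_pbw (ht : t ≠ 0) (ht2 : 1 + t ^ 2 ≠ 0) {s u : R}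
    (hs : s ∈ D.symmY) (hu : u ∈ D.symmX) :
    s * (D.e * D.X₁ * D.e) * u ∈ Submodule.span K (Set.range D.pbw) := by
  have hmem := mul_e_mul_mem_span_pbw ht ht2 hs (mul_mem add_mem_symmLaurentAdjoin hu)
  rwa [mul_assoc s, ← mul_assoc D.e, (D.commute_e_of_mem_symmX add_mem_symmLaurentAdjoin).eq,
    D.X₁_add_X₂_mul_e ht ht2, smul_mul_assoc, mul_smul_comm, ← mul_assoc,
    Submodule.smul_mem_iff _ ht2] at hmem

lemma mul_e_mul_π_mul_e_mul_mem_span_pbw (ht : t ≠ 0) (ht2 : 1 + t ^ 2 ≠ 0) {s u : R}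
    (hs : s ∈ D.symmY) (hu : u ∈ D.symmX) :
    s * (D.e * D.π * D.e) * u ∈ Submodule.span K (Set.range D.pbw) := by
  have hmem := mul_e_mul_mem_span_pbw ht ht2 (mul_mem hs add_mem_symmLaurentAdjoin) hu
  rwa [mul_assoc s, D.Y₁_add_Y₂_mul_e_eq_smul ht ht2, mul_smul_comm, smul_mul_assoc,
    Submodule.smul_mem_iff _ (add_inv_ne_zero_of_one_add_sq_ne_zero ht ht2)] at hmem

lemma mul_e_mul_π_mul_X₁_mul_e_mul_mem_span_pbw (ht : t ≠ 0) (ht2 : 1 + t ^ 2 ≠ 0) {s u : R}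
    (hs : s ∈ D.symmY) (hu : u ∈ D.symmX) :
    s * (D.e * D.π * D.X₁ * D.e) * u ∈ Submodule.span K (Set.range D.pbw) := by
  have hmem := mul_e_mul_W_pow_mul_e_mul_mem_span_pbw 1 hs hu
  rwa [Fin.val_one, pow_one, D.e_mul_W_mul_e ht, mul_smul_comm, smul_mul_assoc,
    Submodule.smul_mem_iff _ (add_inv_ne_zero_of_one_add_sq_ne_zero ht ht2)] at hmem

lemma bimodule_le_comap_mulRight_e (ht : t ≠ 0) (ht2 : 1 + t ^ 2 ≠ 0) :
    D.bimodule ≤ (Submodule.span K (Set.range D.pbw)).comap (LinearMap.mulRight K D.e) := by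
  refine bimoduleSpan_le fun s hs g hg b hb => ?_
  obtain ⟨u, hu, u', hu', rfl⟩ := exists_eq_add_mul_of_mem_laurentAdjoin D.commute_X₁_X₂ hb
  have hsplit : s * (g * (u + u' * D.X₁)) * D.e =
      s * (g * D.e) * u + s * (g * D.X₁ * D.e) * u' := by
    rw [← (commute_left_of_mem_symmLaurentAdjoin D.commute_X₁_X₂ hu').eq]
    simp only [mul_add, add_mul, mul_assoc, (D.commute_e_of_mem_symmX hu).eq,
      (D.commute_e_of_mem_symmX hu').eq]
  rw [Submodule.mem_comap, LinearMap.mulRight_apply, hsplit]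
  obtain rfl | rfl := hg
  · rw [D.e_mul_e ht ht2]
    exact add_mem (mul_e_mul_mem_span_pbw ht ht2 hs hu)
      (mul_e_mul_X₁_mul_e_mul_mem_span_pbw ht ht2 hs hu')
  · exact add_mem (mul_e_mul_π_mul_e_mul_mem_span_pbw ht ht2 hs hu)
      (mul_e_mul_π_mul_X₁_mul_e_mul_mem_span_pbw ht ht2 hs hu')

theorem e_mul_mul_e_mem_span_pbw (hq : q ≠ 0) (ht : t ≠ 0) (ht2 : 1 + t ^ 2 ≠ 0) {y : R}
    (hy : y ∈ D.generated) : D.e * y * D.e ∈ Submodule.span K (Set.range D.pbw) :=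
  bimodule_le_comap_mulRight_e ht ht2 (e_mul_mem_bimodule_of_mem_generated hq ht hy)

end DAHARealization

end Spanning

section Presentation

section Units

variable (q t : ℂ)

/-- The generator `T` of `H_{t,q}` as a unit. -/
def unitT : (DAHA q t)ˣ where
  val := T q t
  inv := Ti q t
  val_inv := by simpa [T, Ti] using RingQuot.mkAlgHom_rel ℂ (DRel.TTi (q := q) (t := t))
  inv_val := by simpa [T, Ti] using RingQuot.mkAlgHom_rel ℂ (DRel.TiT (q := q) (t := t))

/-- The generator `X₁` of `H_{t,q}` as a unit. -/
def unitX₁ : (DAHA q t)ˣ where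
  val := X1 q t
  inv := X1i q t
  val_inv := by simpa [X1, X1i] using RingQuot.mkAlgHom_rel ℂ (DRel.X1X1i (q := q) (t := t))
  inv_val := by simpa [X1, X1i] using RingQuot.mkAlgHom_rel ℂ (DRel.X1iX1 (q := q) (t := t))

/-- The generator `X₂` of `H_{t,q}` as a unit. -/
def unitX₂ : (DAHA q t)ˣ where
  val := X2 q t
  inv := X2i q t
  val_inv := by simpa [X2, X2i] using RingQuot.mkAlgHom_rel ℂ (DRel.X2X2i (q := q) (t := t))
  inv_val := by simpa [X2, X2i] using RingQuot.mkAlgHom_rel ℂ (DRel.X2iX2 (q := q) (t := t))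

/-- The generator `Y₁` of `H_{t,q}` as a unit. -/
def unitY₁ : (DAHA q t)ˣ where
  val := Y1 q t
  inv := Y1i q t
  val_inv := by simpa [Y1, Y1i] using RingQuot.mkAlgHom_rel ℂ (DRel.Y1Y1i (q := q) (t := t))
  inv_val := by simpa [Y1, Y1i] using RingQuot.mkAlgHom_rel ℂ (DRel.Y1iY1 (q := q) (t := t))

/-- The generator `Y₂` of `H_{t,q}` as a unit. -/
def unitY₂ : (DAHA q t)ˣ where
  val := Y2 q t
  inv := Y2i q t
  val_inv := by simpa [Y2, Y2i] using RingQuot.mkAlgHom_rel ℂ (DRel.Y2Y2i (q := q) (t := t))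
  inv_val := by simpa [Y2, Y2i] using RingQuot.mkAlgHom_rel ℂ (DRel.Y2iY2 (q := q) (t := t))

lemma unitT_mul_unitX₁_mul_unitT : unitT q t * unitX₁ q t * unitT q t = unitX₂ q t :=
  Units.ext <| show T q t * X1 q t * T q t = X2 q t by
    simpa [T, X1, X2] using RingQuot.mkAlgHom_rel ℂ (DRel.TX1T (q := q) (t := t))

lemma inv_unitT_mul_unitY₁_mul_inv_unitT :
    (unitT q t)⁻¹ * unitY₁ q t * (unitT q t)⁻¹ = unitY₂ q t :=
  Units.ext <| show Ti q t * Y1 q t * Ti q t = Y2 q t by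
    simpa [Ti, Y1, Y2] using RingQuot.mkAlgHom_rel ℂ (DRel.TiY1Ti (q := q) (t := t))

lemma commute_unitX₁_unitX₂ : Commute (unitX₁ q t) (unitX₂ q t) :=
  Units.ext <| show X1 q t * X2 q t = X2 q t * X1 q t by
    simpa [X1, X2] using RingQuot.mkAlgHom_rel ℂ (DRel.Xcomm (q := q) (t := t))

lemma commute_unitY₁_unitY₂ : Commute (unitY₁ q t) (unitY₂ q t) :=
  Units.ext <| show Y1 q t * Y2 q t = Y2 q t * Y1 q t by
    simpa [Y1, Y2] using RingQuot.mkAlgHom_rel ℂ (DRel.Ycomm (q := q) (t := t))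

lemma inv_unitX₁_mul_unitY₂ :
    (unitX₁ q t)⁻¹ * unitY₂ q t = unitY₂ q t * (unitX₁ q t)⁻¹ * (unitT q t)⁻¹ * (unitT q t)⁻¹ :=
  Units.ext <| show X1i q t * Y2 q t = Y2 q t * X1i q t * Ti q t * Ti q t by
    simpa [X1i, Y2, Ti] using RingQuot.mkAlgHom_rel ℂ (DRel.X1iY2 (q := q) (t := t))

lemma Y1_mul_X1_mul_X2 :
    Y1 q t * (X1 q t * X2 q t) = q ^ 2 • (X1 q t * X2 q t * Y1 q t) := by
  simpa only [Y1, X1, X2, map_mul, map_smul] using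
    RingQuot.mkAlgHom_rel ℂ (DRel.YXX (q := q) (t := t))

lemma T_add_mul_T_sub :
    (T q t + algebraMap ℂ _ t⁻¹) * (T q t - algebraMap ℂ _ t) = 0 := by
  simpa only [T, map_mul, map_add, map_sub, AlgHom.commutes, map_zero] using
    RingQuot.mkAlgHom_rel ℂ (DRel.hecke (q := q) (t := t))

end Units

lemma add_inv_mul_sub_eq {K R : Type*} [Field K] [Ring R] [Algebra K R] {t : K} (ht : t ≠ 0)
    (x : R) : (x + algebraMap K R t⁻¹) * (x - algebraMap K R t) =
      x * x - ((t - t⁻¹) • x + 1) := by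
  have h : algebraMap K R t⁻¹ * algebraMap K R t = 1 := by
    rw [← map_mul, inv_mul_cancel₀ ht, map_one]
  rw [add_mul, mul_sub, mul_sub, h, ← Algebra.commutes, ← Algebra.smul_def, ← Algebra.smul_def]
  module

lemma unitX₁_mul_inv_unitT_mul_unitY₁ (q t : ℂ) :
    unitX₁ q t * ((unitT q t)⁻¹ * unitY₁ q t) = (unitT q t)⁻¹ * unitY₁ q t * unitX₂ q t := by
  have h := inv_unitX₁_mul_unitY₂ q t
  rw [← inv_unitT_mul_unitY₁_mul_inv_unitT, inv_mul_eq_iff_eq_mul] at h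
  rw [← unitT_mul_unitX₁_mul_unitT, ← mul_inv_eq_iff_eq_mul]
  refine (mul_right_cancel (b := (unitT q t)⁻¹) ?_).symm
  simpa only [mul_assoc, mul_inv_rev] using h

lemma commute_unitT_unitX₁_mul_unitX₂ (q t : ℂ) :
    Commute (unitT q t) (unitX₁ q t * unitX₂ q t) := by
  have h := commute_unitX₁_unitX₂ q t
  calc unitT q t * (unitX₁ q t * unitX₂ q t)
      = unitT q t * unitX₁ q t * unitT q t * unitX₁ q t * unitT q t := by
        rw [← unitT_mul_unitX₁_mul_unitT]; simp only [mul_assoc]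
    _ = unitX₁ q t * unitX₂ q t * unitT q t := by rw [unitT_mul_unitX₁_mul_unitT, h.eq]

lemma inv_unitT_mul_unitY₁_mul_unitX₁ (q t : ℂ) :
    ((unitT q t)⁻¹ * unitY₁ q t : (DAHA q t)ˣ) * (unitX₁ q t : DAHA q t) =
      q ^ 2 • (unitX₂ q t * ((unitT q t)⁻¹ * unitY₁ q t : (DAHA q t)ˣ) : DAHA q t) := by
  set π := (unitT q t)⁻¹ * unitY₁ q t with hπ
  have hX₂ : unitX₁ q t * π = π * unitX₂ q t := unitX₁_mul_inv_unitT_mul_unitY₁ q t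
  have hXX : (π : DAHA q t) * ↑(unitX₁ q t * unitX₂ q t) =
      q ^ 2 • (↑(unitX₁ q t * unitX₂ q t) * π : DAHA q t) := by
    have hT := ((commute_unitT_unitX₁_mul_unitX₂ q t).inv_left).units_val.eq
    have hY : (unitY₁ q t : DAHA q t) * ↑(unitX₁ q t * unitX₂ q t) =
        q ^ 2 • (↑(unitX₁ q t * unitX₂ q t) * unitY₁ q t : DAHA q t) := Y1_mul_X1_mul_X2 q t
    rw [hπ, Units.val_mul, mul_assoc, hY, mul_smul_comm, ← mul_assoc, hT, mul_assoc]
  refine (unitX₂ q t).isUnit.mul_left_injective ?_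
  change (π : DAHA q t) * unitX₁ q t * unitX₂ q t =
    q ^ 2 • (unitX₂ q t * π : DAHA q t) * unitX₂ q t
  rw [smul_mul_assoc, mul_assoc, mul_assoc, ← Units.val_mul (unitX₁ q t), hXX, ← Units.val_mul π,
    ← hX₂, (commute_unitX₁_unitX₂ q t).eq, Units.val_mul _ (unitX₁ q t),
    Units.val_mul _ π, mul_assoc]

lemma commute_inv_unitT_mul_unitY₁_mul_self (q t : ℂ) :
    Commute ((unitT q t)⁻¹ * unitY₁ q t * ((unitT q t)⁻¹ * unitY₁ q t)) (unitT q t) := by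
  have hπ : (unitT q t)⁻¹ * unitY₁ q t = unitY₂ q t * unitT q t := by
    rw [← inv_unitT_mul_unitY₁_mul_inv_unitT, inv_mul_cancel_right]
  calc (unitT q t)⁻¹ * unitY₁ q t * ((unitT q t)⁻¹ * unitY₁ q t) * unitT q t
      = unitY₂ q t * unitY₁ q t * unitT q t := by
        nth_rw 1 [hπ]
        rw [mul_assoc (unitY₂ q t), mul_inv_cancel_left]
    _ = unitT q t * ((unitT q t)⁻¹ * unitY₁ q t * ((unitT q t)⁻¹ * unitY₁ q t)) := by
        nth_rw 2 [hπ]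
        rw [← (commute_unitY₁_unitY₂ q t).eq]
        simp only [mul_assoc, mul_inv_cancel_left]

/-- The tautological realization of `H_{t,q}` in itself. -/
def universalRealization (q : ℂ) {t : ℂ} (ht : t ≠ 0) : DAHARealization q t (DAHA q t) where
  T := unitT q t
  X₁ := unitX₁ q t
  π := (unitT q t)⁻¹ * unitY₁ q t
  hecke := sub_eq_zero.mp ((add_inv_mul_sub_eq ht _).symm.trans (T_add_mul_T_sub q t))
  commute_X := by
    rw [unitT_mul_unitX₁_mul_unitT]
    exact commute_unitX₁_unitX₂ q t
  X₁_mul_π := by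
    rw [unitT_mul_unitX₁_mul_unitT]
    exact unitX₁_mul_inv_unitT_mul_unitY₁ q t
  π_mul_X₁ := by
    rw [← Units.val_mul (unitT q t), ← Units.val_mul _ (unitT q t), unitT_mul_unitX₁_mul_unitT]
    exact inv_unitT_mul_unitY₁_mul_unitX₁ q t
  commute_π_sq := commute_inv_unitT_mul_unitY₁_mul_self q t

namespace DAHARealization

section Lift

variable {q t : ℂ} {R : Type*} [Ring R] [Algebra ℂ R] (D : DAHARealization q t R)

/-- The values in `R` of the ten generators of `H_{t,q}`. -/
def gen : DGen → R
  | .T => D.T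
  | .Ti => ↑D.T⁻¹
  | .X1 => D.X₁
  | .X1i => ↑D.X₁⁻¹
  | .X2 => D.X₂
  | .X2i => ↑D.X₂⁻¹
  | .Y1 => D.Y₁
  | .Y1i => ↑D.Y₁⁻¹
  | .Y2 => D.Y₂
  | .Y2i => ↑D.Y₂⁻¹

lemma Y₁_mul_X₁_mul_X₂ : (D.Y₁ * (D.X₁ * D.X₂) : R) = q ^ 2 • (D.X₁ * D.X₂ * D.Y₁ : R) := by
  have hT : (D.T : R) * (D.X₁ * D.X₂ : R) = D.X₁ * D.X₂ * D.T := by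
    simpa using (D.commute_T_of_mem_symmX coe_mul_mem_symmLaurentAdjoin).eq
  have hπX₂ : (D.π * D.X₂ : R) = D.X₁ * D.π := by simpa using D.π_mul_X₂
  have hπ : (D.π : R) * (D.X₁ * D.X₂ : R) = q ^ 2 • (D.X₁ * D.X₂ * D.π : R) := by
    rw [← mul_assoc, D.π_mul_X₁_eq_smul, smul_mul_assoc, mul_assoc, hπX₂, ← mul_assoc,
      D.commute_X₁_X₂.units_val.eq]
  rw [Y₁, Units.val_mul, mul_assoc, hπ, mul_smul_comm, ← mul_assoc, hT, mul_assoc]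

lemma inv_X₁_mul_Y₂ : D.X₁⁻¹ * D.Y₂ = D.Y₂ * D.X₁⁻¹ * D.T⁻¹ * D.T⁻¹ := by
  have h : D.X₁⁻¹ * D.π = D.π * D.X₂⁻¹ := by
    rw [inv_mul_eq_iff_eq_mul, ← mul_assoc, D.X₁_mul_π, X₂, mul_inv_cancel_right]
  rw [Y₂, ← mul_assoc, h, X₂]
  group

lemma coe_T_add_mul_coe_T_sub (ht : t ≠ 0) :
    ((D.T : R) + algebraMap ℂ R t⁻¹) * (D.T - algebraMap ℂ R t) = 0 := by
  rw [add_inv_mul_sub_eq ht, D.hecke, sub_self]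

lemma lift_gen_eq_of_DRel (ht : t ≠ 0) ⦃a b : FD⦄ (h : DRel q t a b) :
    FreeAlgebra.lift ℂ D.gen a = FreeAlgebra.lift ℂ D.gen b := by
  induction h <;> simp only [gD, map_mul, map_add, map_sub, map_one, map_smul, map_zero,
    FreeAlgebra.lift_ι_apply, AlgHom.commutes, gen, Units.mul_inv, Units.inv_mul]
  case TX1T => simp [X₂]
  case TiY1Ti => simp [Y₁, Y₂]
  case Xcomm => exact D.commute_X₁_X₂.units_val.eq
  case Ycomm => exact D.commute_Y₁_Y₂.units_val.eq
  case YXX => exact D.Y₁_mul_X₁_mul_X₂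
  case X1iY2 => simpa using congrArg Units.val D.inv_X₁_mul_Y₂
  case hecke => exact D.coe_T_add_mul_coe_T_sub ht

/-- The algebra map out of `H_{t,q}` determined by a realization. -/
def lift (ht : t ≠ 0) : DAHA q t →ₐ[ℂ] R :=
  RingQuot.liftAlgHom ℂ ⟨FreeAlgebra.lift ℂ D.gen, D.lift_gen_eq_of_DRel ht⟩

variable (ht : t ≠ 0)

lemma lift_mkAlgHom_gD (g : DGen) :
    D.lift ht (RingQuot.mkAlgHom ℂ (DRel q t) (gD g)) = D.gen g := by
  rw [lift, RingQuot.liftAlgHom_mkAlgHom_apply, gD, FreeAlgebra.lift_ι_apply]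

lemma lift_eSym : D.lift ht (eSym q t) = D.e := by
  rw [eSym, map_smul, map_add, map_one, map_smul, _root_.T, lift_mkAlgHom_gD]
  rfl

end Lift

end DAHARealization

lemma map_zp {M N F : Type*} [Monoid M] [Monoid N] [FunLike F M N] [MonoidHomClass F M N] (f : F)
    (x y : M) (n : ℤ) : f (zp x y n) = zp (f x) (f y) n := by
  cases n <;> simp [zp]

lemma zp_coe_units {M : Type*} [Monoid M] (u : Mˣ) (n : ℤ) :
    zp (u : M) ↑u⁻¹ n = ↑(u ^ n) := by
  cases n with
  | ofNat n => simp [zp]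
  | negSucc n => rw [zp, zpow_negSucc, ← inv_pow, Units.val_pow_eq_pow_val]

lemma zp_coe_units_mul {M : Type*} [Monoid M] {u v : Mˣ} (h : Commute u v) (n : ℤ) :
    zp (u * v : M) (↑u⁻¹ * ↑v⁻¹) n = ↑((u * v) ^ n) := by
  rw [← Units.val_mul, ← Units.val_mul, ← mul_inv_rev, ← h.eq, zp_coe_units]

namespace DAHARealization

variable {q t : ℂ} (ht : t ≠ 0) {R : Type*} [Ring R] [Algebra ℂ R] (D : DAHARealization q t R)

lemma lift_pbwSph (i : ℕ × ℤ × Fin 2 × ℕ × ℤ) : D.lift ht (pbwSph q t i) = D.pbw i := by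
  rw [pbwSph, pbw, ← zp_coe_units_mul D.commute_Y₁_Y₂, ← zp_coe_units_mul D.commute_X₁_X₂]
  simp only [X1, X1i, X2, X2i, Y1, Y1i, Y2, Y2i, map_mul, map_add, map_smul, map_pow, map_zp,
    lift_mkAlgHom_gD, lift_eSym, gen, W]

lemma lift_universalRealization :
    (universalRealization q ht).lift ht = AlgHom.id ℂ (DAHA q t) := by
  refine RingQuot.ringQuot_ext' _ _ _ (FreeAlgebra.hom_ext (funext fun g => ?_))
  change (universalRealization q ht).lift ht (RingQuot.mkAlgHom ℂ (DRel q t) (gD g)) =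
    RingQuot.mkAlgHom ℂ (DRel q t) (gD g)
  have hX₂ : (universalRealization q ht).X₂ = unitX₂ q t := unitT_mul_unitX₁_mul_unitT q t
  have hY₁ : (universalRealization q ht).Y₁ = unitY₁ q t := mul_inv_cancel_left _ _
  have hY₂ : (universalRealization q ht).Y₂ = unitY₂ q t := inv_unitT_mul_unitY₁_mul_inv_unitT q t
  rw [lift_mkAlgHom_gD]
  cases g <;> simp only [gen, hX₂, hY₁, hY₂] <;> rfl

lemma gen_mem_generated (g : DGen) : D.gen g ∈ D.generated := by
  have hT : (D.T : R) ∈ D.generated := Algebra.subset_adjoin (by simp)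
  have hTi : (↑D.T⁻¹ : R) ∈ D.generated := Algebra.subset_adjoin (by simp)
  have hX : (D.X₁ : R) ∈ D.generated := Algebra.subset_adjoin (by simp)
  have hXi : (↑D.X₁⁻¹ : R) ∈ D.generated := Algebra.subset_adjoin (by simp)
  have hπ : (D.π : R) ∈ D.generated := Algebra.subset_adjoin (by simp)
  have hπi : (↑D.π⁻¹ : R) ∈ D.generated := Algebra.subset_adjoin (by simp)
  cases g <;> simp only [gen, X₂, Y₁, Y₂, mul_inv_rev, inv_inv, Units.val_mul] <;>
    repeat' first | assumption | apply mul_mem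

lemma lift_mem_generated (y : DAHA q t) : D.lift ht y ∈ D.generated := by
  obtain ⟨x, rfl⟩ := RingQuot.mkAlgHom_surjective ℂ (DRel q t) y
  induction x using FreeAlgebra.induction with
  | grade0 r => simpa only [AlgHom.commutes] using D.generated.algebraMap_mem r
  | grade1 g => exact D.lift_mkAlgHom_gD ht g ▸ D.gen_mem_generated g
  | mul a b ha hb => simpa only [map_mul] using mul_mem ha hb
  | add a b ha hb => simpa only [map_add] using add_mem ha hb

end DAHARealization

open DAHARealization in
theorem span_range_pbwSph {q t : ℂ} (hq : q ≠ 0) (ht : t ≠ 0) (ht2 : 1 + t ^ 2 ≠ 0) :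
    Submodule.span ℂ (Set.range (pbwSph q t)) = sDAHA q t := by
  set U := universalRealization q ht
  have hlift (y : DAHA q t) : U.lift ht y = y := by rw [lift_universalRealization, AlgHom.id_apply]
  have he : eSym q t = U.e := by rw [← U.lift_eSym ht, hlift]
  have hpbw : pbwSph q t = U.pbw := funext fun i => by rw [← U.lift_pbwSph ht, hlift]
  refine le_antisymm (Submodule.span_le.mpr ?_) ?_
  · rintro _ ⟨i, rfl⟩
    exact ⟨_, mul_assoc _ _ _ |>.symm⟩
  · rintro _ ⟨y, rfl⟩
    have hy : y ∈ U.generated := hlift y ▸ U.lift_mem_generated ht y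
    rw [hpbw, LinearMap.comp_apply, LinearMap.mulLeft_apply, LinearMap.mulRight_apply, ← mul_assoc,
      he]
    exact e_mul_mul_e_mem_span_pbw hq ht ht2 hy

end Presentation

section PrincipalSeries

/-- The orbit of a generic point under the extended affine Weyl group `ℤ² ⋊ S₂`: the element
`(m, n, b)` stands for the point `(q²ᵐ x b, q²ⁿ x (!b))` of the torus. -/
abbrev Weight : Type := ℤ × ℤ × Bool

namespace Weight

/-- The simple reflection, exchanging the two coordinates of a point of the orbit. -/
def swap : Equiv.Perm Weight where
  toFun w := (w.2.1, w.1, !w.2.2)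
  invFun w := (w.2.1, w.1, !w.2.2)
  left_inv w := by simp
  right_inv w := by simp

/-- The generator of length zero of the extended affine Weyl group, which sends the point
`(x₁, x₂)` to `(q² x₂, x₁)`. -/
def rotate : Equiv.Perm Weight where
  toFun w := (w.2.1 + 1, w.1, !w.2.2)
  invFun w := (w.2.1, w.1 - 1, !w.2.2)
  left_inv w := by simp
  right_inv w := by simp

@[simp] lemma swap_apply (m n : ℤ) (b : Bool) : swap (m, n, b) = (n, m, !b) := rfl

@[simp] lemma rotate_apply (m n : ℤ) (b : Bool) : rotate (m, n, b) = (n + 1, m, !b) := rfl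

lemma swap_swap (w : Weight) : swap (swap w) = w := swap.left_inv w

section Coordinates

variable {K : Type*} [Field K]

/-- The first coordinate of a point of the orbit; the second one is `coord q x ∘ swap`. -/
def coord (q : K) (x : Bool → K) (w : Weight) : K := (q ^ 2) ^ w.1 * x w.2.2

/-- The coefficient `(t x₁ - t⁻¹ x₂) / (x₁ - x₂)` of the reflection in the Demazure–Lusztig
operator. -/
def coeff (q t : K) (x : Bool → K) (w : Weight) : K :=
  (t * coord q x w - t⁻¹ * coord q x (swap w)) / (coord q x w - coord q x (swap w))

end Coordinates

end Weight

open Weight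

/-- Genericity of the base point `(x false, x true)` of an orbit: both coordinates are nonzero, and
neither `x₁ = x₂` nor `t² x₁ = x₂` holds anywhere on the orbit. -/
structure IsGeneric {K : Type*} [Field K] (q t : K) (x : Bool → K) : Prop where
  ne_zero : ∀ b, x b ≠ 0
  zpow_mul_ne : ∀ (k : ℤ) (b : Bool), (q ^ 2) ^ k * x b ≠ x (!b)
  zpow_mul_sq_mul_ne : ∀ (k : ℤ) (b : Bool), (q ^ 2) ^ k * (t ^ 2 * x b) ≠ x (!b)

variable {K : Type*} [Field K] {q t : K} {x : Bool → K}

/-- The operator `f ↦ f ∘ σ`. -/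
def reindex (K : Type*) [Field K] (σ : Equiv.Perm Weight) : (Module.End K (Weight → K))ˣ :=
  LinearMap.GeneralLinearGroup.ofLinearEquiv (LinearEquiv.funCongrLeft K K σ)

/-- The Demazure–Lusztig operator `t + γ (s - 1)`, by which `T` acts on functions on the orbit. -/
def demazureLusztig (q t : K) (x : Bool → K) : Module.End K (Weight → K) :=
  t • 1 + Algebra.lmul K _ (coeff q t x) * (reindex K swap - 1)

lemma demazureLusztig_apply (f : Weight → K) (w : Weight) :
    demazureLusztig q t x f w = t * f w + coeff q t x w * (f (swap w) - f w) := rfl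

namespace IsGeneric

lemma coord_ne_zero (hx : IsGeneric q t x) (hq : q ≠ 0) (w : Weight) : coord q x w ≠ 0 :=
  mul_ne_zero (zpow_ne_zero _ (pow_ne_zero 2 hq)) (hx.ne_zero _)

lemma coord_swap_ne (hx : IsGeneric q t x) (hq : q ≠ 0) (w : Weight) :
    coord q x w ≠ coord q x (swap w) := by
  obtain ⟨m, n, b⟩ := w
  intro h
  refine hx.zpow_mul_ne (m - n) b ?_
  have hq2 := zpow_ne_zero n (pow_ne_zero 2 hq)
  rw [zpow_sub₀ (pow_ne_zero 2 hq), div_mul_eq_mul_div, div_eq_iff hq2, mul_comm (x _)]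
  exact h

lemma sq_mul_coord_ne (hx : IsGeneric q t x) (hq : q ≠ 0) (w : Weight) :
    t ^ 2 * coord q x w ≠ coord q x (swap w) := by
  obtain ⟨m, n, b⟩ := w
  intro h
  refine hx.zpow_mul_sq_mul_ne (m - n) b ?_
  have hq2 := zpow_ne_zero n (pow_ne_zero 2 hq)
  rw [zpow_sub₀ (pow_ne_zero 2 hq), div_mul_eq_mul_div, div_eq_iff hq2, mul_comm (x _),
    mul_left_comm]
  exact h

lemma coeff_ne_zero (hx : IsGeneric q t x) (hq : q ≠ 0) (ht : t ≠ 0) (w : Weight) :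
    coeff q t x w ≠ 0 := by
  refine div_ne_zero (sub_ne_zero.mpr fun h => hx.sq_mul_coord_ne hq w ?_)
    (sub_ne_zero.mpr (hx.coord_swap_ne hq w))
  rw [sq, mul_assoc, h, mul_inv_cancel_left₀ ht]

lemma coeff_add_coeff_swap (hx : IsGeneric q t x) (hq : q ≠ 0) (w : Weight) :
    coeff q t x w + coeff q t x (swap w) = t + t⁻¹ := by
  have h := sub_ne_zero.mpr (hx.coord_swap_ne hq w)
  have h' := sub_ne_zero.mpr (hx.coord_swap_ne hq w).symm
  rw [coeff, coeff, swap_swap]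
  field_simp
  ring

end IsGeneric

lemma coord_rotate (hq : q ≠ 0) (w : Weight) :
    coord q x (rotate w) = q ^ 2 * coord q x (swap w) := by
  obtain ⟨m, n, b⟩ := w
  simp only [coord, rotate_apply, swap_apply, zpow_add_one₀ (pow_ne_zero 2 hq)]
  ring

lemma coord_swap_rotate (w : Weight) : coord q x (swap (rotate w)) = coord q x w := by
  obtain ⟨m, n, b⟩ := w
  simp only [coord, rotate_apply, swap_apply, Bool.not_not]

lemma coeff_rotate_rotate (hq : q ≠ 0) (w : Weight) :
    coeff q t x (rotate (rotate w)) = coeff q t x w := by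
  simp only [coeff, coord_rotate hq, coord_swap_rotate]
  rw [mul_left_comm t, mul_left_comm t⁻¹, ← mul_sub, ← mul_sub,
    mul_div_mul_left _ _ (pow_ne_zero 2 hq)]

lemma demazureLusztig_mul_self (hx : IsGeneric q t x) (hq : q ≠ 0) (ht : t ≠ 0) :
    demazureLusztig q t x * demazureLusztig q t x = (t - t⁻¹) • demazureLusztig q t x + 1 := by
  ext f w
  change demazureLusztig q t x (demazureLusztig q t x f) w =
    (t - t⁻¹) * demazureLusztig q t x f w + f w
  simp only [demazureLusztig_apply, swap_swap]
  linear_combination coeff q t x w * (f w - f (swap w)) * hx.coeff_add_coeff_swap hq w +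
    f w * mul_inv_cancel₀ ht

lemma demazureLusztig_mul_lmul_coord_mul (hx : IsGeneric q t x) (hq : q ≠ 0) (ht : t ≠ 0) :
    demazureLusztig q t x * Algebra.lmul K _ (coord q x) * demazureLusztig q t x =
      Algebra.lmul K _ (coord q x ∘ swap) := by
  ext f w
  change demazureLusztig q t x (coord q x * demazureLusztig q t x f) w = coord q x (swap w) * f w
  simp only [demazureLusztig_apply, Pi.mul_apply, swap_swap]
  have h := sub_ne_zero.mpr (hx.coord_swap_ne hq w)
  have h' := sub_ne_zero.mpr (hx.coord_swap_ne hq w).symm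
  simp only [coeff, swap_swap]
  field_simp
  ring

/-- The operator by which `T` acts, as a unit. -/
def unitDemazureLusztig (hx : IsGeneric q t x) (hq : q ≠ 0) (ht : t ≠ 0) :
    (Module.End K (Weight → K))ˣ where
  val := demazureLusztig q t x
  inv := demazureLusztig q t x - (t - t⁻¹) • 1
  val_inv := by
    rw [mul_sub, demazureLusztig_mul_self hx hq ht, mul_smul_comm, mul_one, add_sub_cancel_left]
  inv_val := by
    rw [sub_mul, demazureLusztig_mul_self hx hq ht, smul_mul_assoc, one_mul, add_sub_cancel_left]

/-- The operator of multiplication by the first coordinate, by which `X₁` acts. -/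
def unitCoord (hx : IsGeneric q t x) (hq : q ≠ 0) : (Module.End K (Weight → K))ˣ :=
  Units.map (Algebra.lmul K (Weight → K)) (MulEquiv.piUnits.symm fun w =>
    Units.mk0 _ (hx.coord_ne_zero hq w))

lemma coe_unitDemazureLusztig_mul_unitCoord_mul (hx : IsGeneric q t x) (hq : q ≠ 0)
    (ht : t ≠ 0) :
    (unitDemazureLusztig hx hq ht * unitCoord hx hq * unitDemazureLusztig hx hq ht :
      Module.End K (Weight → K)) = Algebra.lmul K _ (coord q x ∘ swap) :=
  demazureLusztig_mul_lmul_coord_mul hx hq ht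

lemma commute_reindex_rotate_sq (hx : IsGeneric q t x) (hq : q ≠ 0) (ht : t ≠ 0) :
    Commute (reindex K rotate * reindex K rotate) (unitDemazureLusztig hx hq ht) := by
  refine Units.ext (LinearMap.ext fun f => funext fun w => ?_)
  change demazureLusztig q t x f (rotate (rotate w)) =
    demazureLusztig q t x (fun w => f (rotate (rotate w))) w
  rw [demazureLusztig_apply, demazureLusztig_apply, coeff_rotate_rotate hq]
  rfl

/-- The principal series representation of `H_{t,q}` on the functions on a generic orbit. -/
def IsGeneric.realization (hx : IsGeneric q t x) (hq : q ≠ 0) (ht : t ≠ 0) :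
    DAHARealization q t (Module.End K (Weight → K)) where
  T := unitDemazureLusztig hx hq ht
  X₁ := unitCoord hx hq
  π := reindex K rotate
  hecke := demazureLusztig_mul_self hx hq ht
  commute_X := Units.ext <| by
    simp only [Units.val_mul, coe_unitDemazureLusztig_mul_unitCoord_mul]
    exact ((Commute.all (coord q x) _).map (Algebra.lmul K (Weight → K))).eq
  X₁_mul_π := Units.ext <| by
    simp only [Units.val_mul, coe_unitDemazureLusztig_mul_unitCoord_mul]
    ext f w
    change coord q x w * f (rotate w) = coord q x (swap (rotate w)) * f (rotate w)
    rw [coord_swap_rotate]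
  π_mul_X₁ := by
    rw [coe_unitDemazureLusztig_mul_unitCoord_mul]
    ext f w
    change coord q x (rotate w) * f (rotate w) = q ^ 2 * (coord q x (swap w) * f (rotate w))
    rw [coord_rotate hq, mul_assoc]
  commute_π_sq := commute_reindex_rotate_sq hx hq ht

end PrincipalSeries

namespace DAHARealization

variable {K R : Type*} [Field K] [Ring R] [Algebra K R] {q t : K} (D : DAHARealization q t R)

/-- The element `(t + t⁻¹) e π`, which acts on the image of `e` as `Y₁ + Y₂`. -/
def lowering : R := (t + t⁻¹) • (D.e * D.π)

variable {D} (ht : t ≠ 0) (ht2 : 1 + t ^ 2 ≠ 0)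
include ht ht2

lemma add_pow_mul_e (n : ℕ) : (D.Y₁ + D.Y₂ : R) ^ n * D.e = D.lowering ^ n * D.e := by
  induction n with
  | zero => rw [pow_zero, pow_zero]
  | succ n ih =>
    have he : D.e * D.lowering = D.lowering := by
      rw [lowering, mul_smul_comm, ← mul_assoc, D.e_mul_e ht ht2]
    have hstep : (D.Y₁ + D.Y₂ : R) * D.e = D.e * (D.lowering * D.e) := by
      rw [D.Y₁_add_Y₂_mul_e_eq_smul ht ht2, ← mul_assoc, he, lowering, smul_mul_assoc]
    rw [pow_succ, mul_assoc, hstep, ← mul_assoc, ih, mul_assoc, ← mul_assoc D.e, he, ← mul_assoc,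
      pow_succ]

lemma e_mul_W_pow_mul_e (ε : Fin 2) :
    D.e * D.W ^ (ε : ℕ) * D.e = (D.lowering * D.X₁) ^ (ε : ℕ) * D.e := by
  obtain rfl | rfl : ε = 0 ∨ ε = 1 := by omega
  · rw [Fin.val_zero, pow_zero, pow_zero, mul_one, one_mul, D.e_mul_e ht ht2]
  · rw [Fin.val_one, pow_one, pow_one, D.e_mul_W_mul_e ht, lowering, smul_mul_assoc,
      smul_mul_assoc]

lemma pbw_eq (a₁ : ℕ) (a₂ : ℤ) (ε : Fin 2) (b₁ : ℕ) (b₂ : ℤ) :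
    D.pbw (a₁, a₂, ε, b₁, b₂) = ↑((D.Y₁ * D.Y₂) ^ a₂) * (D.lowering ^ a₁ *
      ((D.lowering * D.X₁) ^ (ε : ℕ) *
        ((D.X₁ + D.X₂ : R) ^ b₁ * ↑((D.X₁ * D.X₂) ^ b₂) * D.e))) := by
  have hY := add_pow_mul_mul_zpow_mem_symmLaurentAdjoin (K := K) D.commute_Y₁_Y₂ a₁ a₂
  have hX := add_pow_mul_mul_zpow_mem_symmLaurentAdjoin (K := K) D.commute_X₁_X₂ b₁ b₂
  have hYY : Commute ((D.Y₁ + D.Y₂ : R) ^ a₁) ↑((D.Y₁ * D.Y₂) ^ a₂) :=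
    ((commute_add_mul_of_commute D.commute_Y₁_Y₂).units_zpow_right a₂).pow_left a₁
  set u := (D.X₁ + D.X₂ : R) ^ b₁ * ↑((D.X₁ * D.X₂) ^ b₂)
  calc D.pbw (a₁, a₂, ε, b₁, b₂)
      = ↑((D.Y₁ * D.Y₂) ^ a₂) * (D.Y₁ + D.Y₂ : R) ^ a₁ * (D.e * D.W ^ (ε : ℕ) * D.e) * u := by
        rw [← hYY.eq, ← e_mul_mul_W_pow_mul_mul_e hY hX, pbw]
        simp only [u, mul_assoc]
    _ = ↑((D.Y₁ * D.Y₂) ^ a₂) * ((D.Y₁ + D.Y₂ : R) ^ a₁ * D.e * (D.W ^ (ε : ℕ) * D.e) * u) := by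
        simp only [mul_assoc]
    _ = ↑((D.Y₁ * D.Y₂) ^ a₂) * (D.lowering ^ a₁ * (D.e * D.W ^ (ε : ℕ) * D.e * u)) := by
        rw [add_pow_mul_e ht ht2]
        simp only [mul_assoc]
    _ = _ := by
        rw [e_mul_W_pow_mul_e ht ht2, mul_assoc _ D.e, (D.commute_e_of_mem_symmX hX).eq]

end DAHARealization

section LeadingTerm

variable {K : Type*} [Field K] {q t : K} {x : Bool → K}

open Weight

/-- The function `f` on the orbit vanishes at all weights `(i, _, false)` and `(_, i, true)` with
`i < k`, and at the weights `(k, _, false)` it is `c` times the indicator function of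
`(k, l, false)`. -/
structure HasLeadingTerm (f : Weight → K) (k l : ℤ) (c : K) : Prop where
  apply_false : ∀ i < k, ∀ j, f (i, j, false) = 0
  apply_true : ∀ i < k, ∀ j, f (j, i, true) = 0
  apply_leading : ∀ j, f (k, j, false) = if j = l then c else 0

/-- The function supported on the two weights over the base point, with value `1` there. -/
def baseDelta : Weight → K := fun w => if w.1 = 0 ∧ w.2.1 = 0 then 1 else 0

lemma hasLeadingTerm_baseDelta : HasLeadingTerm (baseDelta : Weight → K) 0 0 1 where
  apply_false i hi j := by simp [baseDelta, hi.ne]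
  apply_true i hi j := by simp [baseDelta, hi.ne]
  apply_leading j := by simp [baseDelta]

namespace HasLeadingTerm

variable {f : Weight → K} {k l : ℤ} {c : K}

lemma mul (hf : HasLeadingTerm f k l c) (h : Weight → K) :
    HasLeadingTerm (h * f) k l (h (k, l, false) * c) where
  apply_false i hi j := by rw [Pi.mul_apply, hf.apply_false i hi, mul_zero]
  apply_true i hi j := by rw [Pi.mul_apply, hf.apply_true i hi, mul_zero]
  apply_leading j := by
    rw [Pi.mul_apply, hf.apply_leading]
    split_ifs with hj
    · rw [hj]
    · rw [mul_zero]

end HasLeadingTerm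

/-- The factor by which `lowering ^ n` multiplies a leading term at `(0, 0, false)`. -/
def loweringCoeff (q t : K) (x : Bool → K) (n : ℕ) : K :=
  ∏ r ∈ Finset.range n, coeff q t x (-r - 1, 0, false)

/-- The total `Y`-degree `a₁ + a₂ + ε` of the element of the PBW family with index
`(a₁, a₂, ε, b₁, b₂)`; it moves the leading term from `(0, 0)` to `(-pbwHeight, -a₂)`. -/
def pbwHeight (i : ℕ × ℤ × Fin 2 × ℕ × ℤ) : ℤ := i.1 + i.2.1 + (i.2.2.1 : ℕ)

namespace IsGeneric

variable (hx : IsGeneric q t x) (hq : q ≠ 0) (ht : t ≠ 0)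

lemma lowering_apply (ht2 : 1 + t ^ 2 ≠ 0) (f : Weight → K) (w : Weight) :
    (hx.realization hq ht).lowering f w =
      coeff q t x w * f (rotate (swap w)) + coeff q t x (swap w) * f (rotate w) := by
  have happly : (hx.realization hq ht).lowering f w = (t + t⁻¹) * ((1 + t ^ 2)⁻¹ *
      (f (rotate w) + t * (t * f (rotate w) +
        coeff q t x w * (f (rotate (swap w)) - f (rotate w))))) := rfl
  have hscalar : (t + t⁻¹) * (1 + t ^ 2)⁻¹ = t⁻¹ := by field_simp; ring
  have h := hx.coeff_add_coeff_swap hq w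
  rw [happly, ← mul_assoc, hscalar, eq_sub_of_add_eq' h]
  field_simp
  ring

lemma e_baseDelta (ht2 : 1 + t ^ 2 ≠ 0) :
    (hx.realization hq ht).e (baseDelta : Weight → K) = baseDelta := by
  funext w
  have happly : (hx.realization hq ht).e (baseDelta : Weight → K) w = (1 + t ^ 2)⁻¹ *
      (baseDelta w + t * (t * baseDelta w +
        coeff q t x w * (baseDelta (swap w) - baseDelta w))) := rfl
  have hswap : (baseDelta (swap w) : K) = baseDelta w := by
    simp only [baseDelta, swap, Equiv.coe_fn_mk, and_comm]
  rw [happly, hswap]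
  field_simp
  ring

lemma _root_.HasLeadingTerm.lowering (ht2 : 1 + t ^ 2 ≠ 0) {f : Weight → K} {k l : ℤ} {c : K}
    (hf : HasLeadingTerm f k l c) :
    HasLeadingTerm ((hx.realization hq ht).lowering f) (k - 1) l
      (coeff q t x (k - 1, l, false) * c) where
  apply_false i hi j := by
    rw [hx.lowering_apply hq ht ht2]
    simp [hf.apply_false (i + 1) (by omega), hf.apply_true i (by omega)]
  apply_true i hi j := by
    rw [hx.lowering_apply hq ht ht2]
    simp [hf.apply_false (i + 1) (by omega), hf.apply_true i (by omega)]
  apply_leading j := by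
    rw [hx.lowering_apply hq ht ht2]
    simp only [rotate_apply, swap_apply, Bool.not_true, Bool.not_false, sub_add_cancel,
      hf.apply_leading, hf.apply_true (k - 1) (by omega), mul_zero, add_zero]
    split_ifs with hj
    · rw [hj]
    · rw [mul_zero]

lemma Y₁_mul_Y₂_zpow_apply (a : ℤ) (f : Weight → K) (m n : ℤ) (b : Bool) :
    (↑(((hx.realization hq ht).Y₁ * (hx.realization hq ht).Y₂) ^ a) :
      Module.End K (Weight → K)) f (m, n, b) = f (m + a, n + a, b) := by
  rw [DAHARealization.Y₁_mul_Y₂]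
  induction a generalizing f m n with
  | zero => simp
  | succ a ih =>
    rw [zpow_add_one, Units.val_mul, Module.End.mul_apply, ih, add_comm (a : ℤ), ← add_assoc,
      ← add_assoc]
    change f (rotate (rotate (m + a, n + a, b))) = f _
    simp only [rotate_apply, Bool.not_not, add_right_comm]
  | pred a ih =>
    rw [zpow_sub_one, Units.val_mul, Module.End.mul_apply, ih, mul_inv_rev]
    change f (rotate.symm (rotate.symm (m + -a, n + -a, b))) = f _
    simp only [rotate, Equiv.coe_fn_symm_mk, Bool.not_not, add_sub_assoc]

lemma _root_.HasLeadingTerm.Y₁_mul_Y₂_zpow (a : ℤ) {f : Weight → K} {k l : ℤ} {c : K}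
    (hf : HasLeadingTerm f k l c) :
    HasLeadingTerm ((↑(((hx.realization hq ht).Y₁ * (hx.realization hq ht).Y₂) ^ a) :
      Module.End K (Weight → K)) f) (k - a) (l - a) c where
  apply_false i hi j := by
    rw [hx.Y₁_mul_Y₂_zpow_apply hq ht, hf.apply_false _ (by omega)]
  apply_true i hi j := by
    rw [hx.Y₁_mul_Y₂_zpow_apply hq ht, hf.apply_true _ (by omega)]
  apply_leading j := by
    rw [hx.Y₁_mul_Y₂_zpow_apply hq ht, sub_add_cancel, hf.apply_leading]
    exact if_congr eq_sub_iff_add_eq.symm rfl rfl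

lemma coe_X₁_eq_lmul : ((hx.realization hq ht).X₁ : Module.End K (Weight → K)) =
    Algebra.lmul K _ (coord q x) := rfl

lemma coe_X₂_eq_lmul : ((hx.realization hq ht).X₂ : Module.End K (Weight → K)) =
    Algebra.lmul K _ (coord q x ∘ swap) :=
  demazureLusztig_mul_lmul_coord_mul hx hq ht

lemma X₁_mul_X₂_zpow_eq_lmul (b : ℤ) :
    (↑(((hx.realization hq ht).X₁ * (hx.realization hq ht).X₂) ^ b) :
      Module.End K (Weight → K)) =
        Algebra.lmul K _ ((coord q x * coord q x ∘ swap) ^ b) := by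
  let c : (Weight → K)ˣ := MulEquiv.piUnits.symm fun w => Units.mk0 _ (hx.coord_ne_zero hq w)
  let c' : (Weight → K)ˣ :=
    MulEquiv.piUnits.symm fun w => Units.mk0 _ (hx.coord_ne_zero hq (swap w))
  have h : (hx.realization hq ht).X₁ * (hx.realization hq ht).X₂ =
      Units.map (Algebra.lmul K (Weight → K)) (c * c') := by
    rw [map_mul]
    exact congrArg _ (Units.ext (hx.coe_X₂_eq_lmul hq ht))
  rw [h, ← map_zpow]
  exact congrArg (Algebra.lmul K (Weight → K)) (Units.val_zpow_eq_zpow_val _ b)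

include hx hq ht in
lemma loweringCoeff_ne_zero (n : ℕ) : loweringCoeff q t x n ≠ 0 :=
  Finset.prod_ne_zero_iff.mpr fun _ _ => hx.coeff_ne_zero hq ht _

lemma _root_.HasLeadingTerm.lowering_pow (ht2 : 1 + t ^ 2 ≠ 0) {f : Weight → K} {m : ℕ} {c : K}
    (hf : HasLeadingTerm f (-m) 0 (loweringCoeff q t x m * c)) (n : ℕ) :
    HasLeadingTerm (((hx.realization hq ht).lowering ^ n) f) (-(n + m : ℕ)) 0
      (loweringCoeff q t x (n + m) * c) := by
  induction n with
  | zero => simpa only [zero_add, pow_zero, Module.End.one_apply] using hf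
  | succ n ih =>
    rw [pow_succ', Module.End.mul_apply, Nat.succ_add, Nat.succ_eq_add_one, Nat.cast_succ, neg_add',
      loweringCoeff, Finset.prod_range_succ_comm, mul_assoc]
    exact ih.lowering hx hq ht ht2

lemma hasLeadingTerm_add_pow_mul_zpow (b₁ : ℕ) (b₂ : ℤ) :
    HasLeadingTerm ((((hx.realization hq ht).X₁ + (hx.realization hq ht).X₂) ^ b₁ *
      ↑(((hx.realization hq ht).X₁ * (hx.realization hq ht).X₂) ^ b₂) :
        Module.End K (Weight → K)) baseDelta) 0 0
      ((x false + x true) ^ b₁ * (x false * x true) ^ b₂) := by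
  rw [hx.X₁_mul_X₂_zpow_eq_lmul, hx.coe_X₁_eq_lmul, hx.coe_X₂_eq_lmul, ← map_add, ← map_pow,
    ← map_mul]
  have h := hasLeadingTerm_baseDelta.mul
    ((coord q x + coord q x ∘ swap) ^ b₁ * (coord q x * coord q x ∘ swap) ^ b₂)
  simpa [coord] using h

lemma hasLeadingTerm_lowering_mul_X₁_pow (ht2 : 1 + t ^ 2 ≠ 0) {f : Weight → K} {c : K}
    (hf : HasLeadingTerm f 0 0 c) (ε : Fin 2) :
    HasLeadingTerm ((((hx.realization hq ht).lowering * (hx.realization hq ht).X₁) ^ (ε : ℕ) :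
      Module.End K (Weight → K)) f) (-(ε : ℕ)) 0
      (loweringCoeff q t x ε * (x false ^ (ε : ℕ) * c)) := by
  obtain rfl | rfl : ε = 0 ∨ ε = 1 := by omega
  · simpa [loweringCoeff] using hf
  · have h := (hf.mul (coord q x)).lowering hx hq ht ht2
    simp only [coord, zpow_zero, one_mul] at h
    simpa [loweringCoeff, hx.coe_X₁_eq_lmul] using h

lemma hasLeadingTerm_pbw (ht2 : 1 + t ^ 2 ≠ 0) (a₁ : ℕ) (a₂ : ℤ) (ε : Fin 2) (b₁ : ℕ) (b₂ : ℤ) :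
    HasLeadingTerm ((hx.realization hq ht).pbw (a₁, a₂, ε, b₁, b₂) baseDelta)
      (-(a₁ + a₂ + (ε : ℕ))) (-a₂)
      (loweringCoeff q t x (a₁ + ε) *
        (x false ^ (ε : ℕ) * ((x false + x true) ^ b₁ * (x false * x true) ^ b₂))) := by
  have hX := hx.hasLeadingTerm_add_pow_mul_zpow hq ht b₁ b₂
  have hlow := (hasLeadingTerm_lowering_mul_X₁_pow hx hq ht ht2 hX ε).lowering_pow hx hq ht ht2 a₁
  have hY := hlow.Y₁_mul_Y₂_zpow hx hq ht a₂
  rw [DAHARealization.pbw_eq ht ht2]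
  simp only [Module.End.mul_apply, hx.e_baseDelta hq ht ht2] at hY ⊢
  convert hY using 1
  · push_cast; ring
  · rw [zero_sub]

lemma pbw_baseDelta_apply (ht2 : 1 + t ^ 2 ≠ 0) {i : ℕ × ℤ × Fin 2 × ℕ × ℤ} {H : ℤ}
    (hi : pbwHeight i ≤ H) (l : ℤ) :
    (hx.realization hq ht).pbw i baseDelta (-H, -l, false) =
      if pbwHeight i = H ∧ i.2.1 = l then loweringCoeff q t x (H - l).toNat *
        (x false ^ (i.2.2.1 : ℕ) *
          ((x false + x true) ^ i.2.2.2.1 * (x false * x true) ^ i.2.2.2.2))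
      else 0 := by
  obtain ⟨a₁, a₂, ε, b₁, b₂⟩ := i
  have hlead := hx.hasLeadingTerm_pbw hq ht ht2 a₁ a₂ ε b₁ b₂
  obtain hlt | rfl := hi.lt_or_eq
  · rw [if_neg fun h => hlt.ne h.1]
    exact hlead.apply_false _ (neg_lt_neg hlt) _
  · refine (hlead.apply_leading _).trans ?_
    simp only [neg_inj, true_and, @eq_comm _ l]
    refine if_ctx_congr Iff.rfl (fun h => ?_) fun _ => rfl
    have hn : (pbwHeight (a₁, a₂, ε, b₁, b₂) - l).toNat = a₁ + ε := by
      simp only [pbwHeight]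
      omega
    rw [hn]

end IsGeneric

end LeadingTerm

section Interpolation

open Polynomial

variable {K ι : Type*} [Field K] {s : Finset ι}

lemma eq_zero_of_sum_mul_zpow_mul_eval_eq_zero {S : Set K} (hS : S.Infinite) (hS0 : 0 ∉ S)
    {p : ι → K[X]} (hp : ∀ i ∈ s, (p i).coeff 0 ≠ 0) {c : ι → ℤ} (hc : Set.InjOn c s) {g : ι → K}
    (h : ∀ z ∈ S, ∑ i ∈ s, g i * (z ^ c i * (p i).eval z) = 0) {i : ι} (hi : i ∈ s) :
    g i = 0 := by
  classical
  by_contra hgi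
  obtain ⟨j, hj, hmin⟩ := (s.filter (g · ≠ 0)).exists_min_image c
    ⟨i, Finset.mem_filter.mpr ⟨hi, hgi⟩⟩
  obtain ⟨hjs, hgj⟩ := Finset.mem_filter.mp hj
  let P : K[X] := ∑ i ∈ s with g i ≠ 0, C (g i) * (X ^ (c i - c j).toNat * p i)
  have hP : P = 0 := by
    refine eq_zero_of_infinite_isRoot P (hS.mono fun z hz => ?_)
    have hz0 : z ≠ 0 := ne_of_mem_of_not_mem hz hS0
    have hterm : ∀ i ∈ s.filter (g · ≠ 0), (C (g i) * (X ^ (c i - c j).toNat * p i)).eval z =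
        z ^ (-c j) * (g i * (z ^ c i * (p i).eval z)) := fun i hi => by
      have hzpow : z ^ (c i - c j).toNat = z ^ c i * z ^ (-c j) := by
        rw [← zpow_natCast, Int.toNat_of_nonneg (sub_nonneg.mpr (hmin i hi)), sub_eq_add_neg,
          zpow_add₀ hz0]
      rw [eval_mul, eval_mul, eval_C, eval_pow, eval_X, hzpow]
      ring
    have hfilter : ∑ i ∈ s with g i ≠ 0, g i * (z ^ c i * (p i).eval z) = 0 := by
      rw [Finset.sum_filter_of_ne fun i _ => left_ne_zero_of_mul, h z hz]
    rw [Set.mem_ofPred_eq, IsRoot, eval_finsetSum, Finset.sum_congr rfl hterm, ← Finset.mul_sum,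
      hfilter, mul_zero]
  have hcoeff : P.coeff 0 = g j * (p j).coeff 0 := by
    rw [finsetSum_coeff, Finset.sum_eq_single_of_mem j hj]
    · simp only [sub_self, Int.toNat_zero, pow_zero, one_mul, coeff_C_mul]
    · intro i hi hij
      have hlt : c j < c i := lt_of_le_of_ne (hmin i hi) fun hji =>
        hij (hc (Finset.mem_filter.mp hi).1 hjs hji.symm)
      rw [coeff_C_mul, coeff_X_pow_mul', if_neg (by omega), mul_zero]
  rw [hP, coeff_zero] at hcoeff
  exact mul_ne_zero hgj (hp j hjs) hcoeff.symm

lemma sum_filter_eq_zero_of_sum_mul_zpow_eq_zero {S : Set K} (hS : S.Infinite) (hS0 : 0 ∉ S)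
    {d : ι → ℤ} {g : ι → K} (h : ∀ z ∈ S, ∑ i ∈ s, g i * z ^ d i = 0) (n : ℤ) :
    ∑ i ∈ s with d i = n, g i = 0 := by
  by_cases hn : n ∈ s.image d
  · refine eq_zero_of_sum_mul_zpow_mul_eval_eq_zero (s := s.image d) (p := fun _ => 1) (c := id)
      (g := fun n => ∑ i ∈ s with d i = n, g i) hS hS0 ?_ Function.injective_id.injOn ?_ hn
    · intro _ _
      rw [coeff_one_zero]
      exact one_ne_zero
    · intro z hz
      rw [← h z hz, ← Finset.sum_fiberwise_of_maps_to fun i hi => Finset.mem_image_of_mem d hi]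
      refine Finset.sum_congr rfl fun n _ => ?_
      rw [eval_one, mul_one, Finset.sum_mul]
      exact Finset.sum_congr rfl fun i hi => by rw [(Finset.mem_filter.mp hi).2, id]
  · rw [Finset.filter_false_of_mem fun i hi hin =>
      hn (Finset.mem_image.mpr ⟨i, hi, hin⟩), Finset.sum_empty]

end Interpolation

section GenericPoints

variable {K ι : Type*} [Field K] {q t : K} {x : Bool → K}

lemma IsGeneric.comp_not (hx : IsGeneric q t x) : IsGeneric q t (x ∘ not) where
  ne_zero _ := hx.ne_zero _
  zpow_mul_ne k _ := hx.zpow_mul_ne k _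
  zpow_mul_sq_mul_ne k _ := hx.zpow_mul_sq_mul_ne k _

lemma IsGeneric.const_smul (hx : IsGeneric q t x) {c : K} (hc : c ≠ 0) : IsGeneric q t (c • x) where
  ne_zero b := mul_ne_zero hc (hx.ne_zero b)
  zpow_mul_ne k b h := hx.zpow_mul_ne k b <| mul_left_cancel₀ hc <| by
    rw [mul_left_comm]
    exact h
  zpow_mul_sq_mul_ne k b h := hx.zpow_mul_sq_mul_ne k b <| mul_left_cancel₀ hc <| by
    rw [mul_left_comm, mul_left_comm c]
    exact h

lemma IsGeneric.false_ne_true (hx : IsGeneric q t x) : x false ≠ x true := by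
  have h := hx.zpow_mul_ne 0 false
  rwa [zpow_zero, one_mul] at h

/-- The pair `(1, z)`. -/
def onePair (z : K) (b : Bool) : K := bif b then z else 1

lemma isGeneric_onePair {z : K} (hz : z ≠ 0) (h : ∀ k : ℤ, z ≠ (q ^ 2) ^ k)
    (ht : ∀ k : ℤ, z ≠ (q ^ 2) ^ k * t ^ 2) (ht' : ∀ k : ℤ, z⁻¹ ≠ (q ^ 2) ^ k * t ^ 2) :
    IsGeneric q t (onePair z) where
  ne_zero b := by cases b <;> simp [onePair, hz]
  zpow_mul_ne k b := by
    cases b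
    · simpa [onePair] using (h k).symm
    · intro hk
      refine h (-k) ?_
      rw [zpow_neg]
      exact eq_inv_of_mul_eq_one_right hk
  zpow_mul_sq_mul_ne k b := by
    cases b
    · simpa [onePair] using (ht k).symm
    · intro hk
      refine ht' k (inv_eq_of_mul_eq_one_left ?_)
      rw [mul_assoc]
      exact hk

lemma infinite_setOf_isGeneric_onePair [Uncountable K] (q t : K) :
    {z : K | IsGeneric q t (onePair z)}.Infinite := by
  let bad : Set K := {0} ∪ Set.range (fun k : ℤ => (q ^ 2) ^ k) ∪
    Set.range (fun k : ℤ => (q ^ 2) ^ k * t ^ 2) ∪ Set.range fun k : ℤ => ((q ^ 2) ^ k * t ^ 2)⁻¹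
  have hbad : bad.Countable := (((Set.countable_singleton 0).union (Set.countable_range _)).union
    (Set.countable_range _)).union (Set.countable_range _)
  have hgood : badᶜ.Infinite := fun hfin =>
    Set.not_countable_univ (Set.compl_union_self bad ▸ hfin.countable.union hbad)
  refine hgood.mono fun z hz => ?_
  simp only [bad, Set.mem_compl_iff, Set.mem_union, Set.mem_singleton_iff, Set.mem_range,
    not_or, not_exists] at hz
  obtain ⟨⟨⟨h0, h⟩, ht⟩, ht'⟩ := hz
  exact isGeneric_onePair h0 (fun k hk => h k hk.symm) (fun k hk => ht k hk.symm)
    fun k hk => ht' k (hk ▸ inv_inv z)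

variable [Uncountable K] {s : Finset ι} {ε : ι → Fin 2} {b : ι → ℕ} {c : ι → ℤ} {g : ι → K}

lemma eq_zero_of_sum_add_pow_mul_mul_zpow_eq_zero
    (hinj : Set.InjOn (fun i => (b i, c i)) s)
    (h : ∀ x, IsGeneric q t x →
      ∑ i ∈ s, g i * ((x false + x true) ^ b i * (x false * x true) ^ c i) = 0)
    {i : ι} (hi : i ∈ s) : g i = 0 := by
  classical
  have hgen := infinite_setOf_isGeneric_onePair q t
  let deg (j : ι) : ℤ := b j + 2 * c j
  have hdeg (z : K) (hz : IsGeneric q t (onePair z)) :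
      ∑ j ∈ s with deg j = deg i, g j * ((1 + z) ^ b j * z ^ c j) = 0 := by
    refine sum_filter_eq_zero_of_sum_mul_zpow_eq_zero (S := {0}ᶜ)
      (Set.finite_singleton 0).infinite_compl (fun h0 => h0 rfl) (fun w hw => ?_) _
    rw [← h _ (hz.const_smul hw)]
    refine Finset.sum_congr rfl fun j _ => ?_
    have hfactor : w + w * z = w * (1 + z) := by ring
    have hfactor' : w * (w * z) = w ^ 2 * z := by ring
    simp only [Pi.smul_apply, smul_eq_mul, onePair, cond_false, cond_true, mul_one, deg]
    rw [hfactor, hfactor', mul_pow, mul_zpow, zpow_add₀ hw, zpow_natCast, zpow_mul, zpow_ofNat]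
    ring
  have hc : Set.InjOn c (s.filter fun j => deg j = deg i) := fun j hj k hk hjk => by
    obtain ⟨hjs, hj⟩ := Finset.mem_filter.mp hj
    obtain ⟨hks, hk⟩ := Finset.mem_filter.mp hk
    exact hinj hjs hks (Prod.ext (by simp only [deg] at hj hk ⊢; omega) hjk)
  refine eq_zero_of_sum_mul_zpow_mul_eval_eq_zero (p := fun j => (1 + Polynomial.X) ^ b j) hgen
    (fun h0 => h0.ne_zero true rfl) (fun j _ => ?_) hc (fun z hz => ?_)
    (Finset.mem_filter.mpr ⟨hi, rfl⟩)
  · simp [Polynomial.coeff_zero_eq_eval_zero]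
  · rw [← hdeg z hz]
    simp [mul_comm]

lemma eq_zero_of_sum_pow_mul_add_pow_mul_mul_zpow_eq_zero
    (hinj : Set.InjOn (fun i => (ε i, b i, c i)) s)
    (h : ∀ x, IsGeneric q t x → ∑ i ∈ s, g i *
      (x false ^ (ε i : ℕ) * ((x false + x true) ^ b i * (x false * x true) ^ c i)) = 0)
    {i : ι} (hi : i ∈ s) : g i = 0 := by
  let F (j : Fin 2) (x : Bool → K) : K :=
    ∑ i ∈ s with ε i = j, g i * ((x false + x true) ^ b i * (x false * x true) ^ c i)
  have hF (x : Bool → K) (hx : IsGeneric q t x) : F 0 x + x false * F 1 x = 0 := by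
    rw [← h x hx, ← Finset.sum_fiberwise s ε, Fin.sum_univ_two, Finset.mul_sum]
    congr 1 <;> refine Finset.sum_congr rfl fun i hi => ?_ <;> rw [(Finset.mem_filter.mp hi).2]
    · rw [Fin.val_zero, pow_zero, one_mul]
    · rw [Fin.val_one, pow_one, mul_left_comm]
  have hF' (x : Bool → K) (hx : IsGeneric q t x) : F 0 x + x true * F 1 x = 0 := by
    have hnot (j : Fin 2) : F j (x ∘ not) = F j x := by
      simp only [F, Function.comp_apply, Bool.not_false, Bool.not_true, add_comm (x true),
        mul_comm (x true)]
    rw [← hF _ hx.comp_not, hnot, hnot]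
    rfl
  have hF1 (x : Bool → K) (hx : IsGeneric q t x) : F 1 x = 0 := by
    refine (mul_eq_zero.mp ?_).resolve_left (sub_ne_zero.mpr hx.false_ne_true)
    linear_combination hF x hx - hF' x hx
  have hFzero (j : Fin 2) (x : Bool → K) (hx : IsGeneric q t x) : F j x = 0 := by
    obtain rfl | rfl : j = 0 ∨ j = 1 := by omega
    · rw [← hF x hx, hF1 x hx, mul_zero, add_zero]
    · exact hF1 x hx
  refine eq_zero_of_sum_add_pow_mul_mul_zpow_eq_zero (s := s.filter (ε · = ε i)) ?_
    (hFzero (ε i)) (Finset.mem_filter.mpr ⟨hi, rfl⟩)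
  intro j hj k hk hjk
  obtain ⟨hjs, hj⟩ := Finset.mem_filter.mp hj
  obtain ⟨hks, hk⟩ := Finset.mem_filter.mp hk
  exact hinj hjs hks (Prod.ext (hj.trans hk.symm) hjk)

end GenericPoints

section LinearIndependence

lemma eq_zero_of_sum_smul_pbw_baseDelta_eq_zero {K : Type*} [Field K] [Uncountable K] {q t : K}
    (hq : q ≠ 0) (ht : t ≠ 0) (ht2 : 1 + t ^ 2 ≠ 0) {s : Finset (ℕ × ℤ × Fin 2 × ℕ × ℤ)}
    {g : ℕ × ℤ × Fin 2 × ℕ × ℤ → K}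
    (h : ∀ x (hx : IsGeneric q t x),
      ∑ i ∈ s, g i • (hx.realization hq ht).pbw i baseDelta = 0) :
    ∀ i ∈ s, g i = 0 := by
  classical
  by_contra! hne
  obtain ⟨j, hj, hmax⟩ := (s.filter (g · ≠ 0)).exists_max_image pbwHeight
    (Finset.filter_nonempty_iff.mpr hne)
  obtain ⟨hjs, hgj⟩ := Finset.mem_filter.mp hj
  refine hgj (eq_zero_of_sum_pow_mul_add_pow_mul_mul_zpow_eq_zero (q := q) (t := t)
    (s := s.filter fun i => pbwHeight i = pbwHeight j ∧ i.2.1 = j.2.1) (ε := fun i => i.2.2.1)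
    (b := fun i => i.2.2.2.1) (c := fun i => i.2.2.2.2) ?_ (fun x hx => ?_)
    (Finset.mem_filter.mpr ⟨hjs, rfl, rfl⟩))
  · intro i hi k hk hik
    obtain ⟨-, hi, hi'⟩ := Finset.mem_filter.mp hi
    obtain ⟨-, hk, hk'⟩ := Finset.mem_filter.mp hk
    simp only [pbwHeight, Prod.mk.injEq] at hi hk hik
    simp only [Prod.ext_iff]
    omega
  · refine (mul_eq_zero.mp ?_).resolve_left
      (hx.loweringCoeff_ne_zero hq ht (pbwHeight j - j.2.1).toNat)
    have heval := congrFun (h x hx) (-pbwHeight j, -j.2.1, false)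
    rw [Finset.sum_apply, Pi.zero_apply] at heval
    rw [← heval, Finset.sum_filter, Finset.mul_sum]
    refine Finset.sum_congr rfl fun i hi => ?_
    rw [Pi.smul_apply, smul_eq_mul]
    by_cases hgi : g i = 0
    · simp only [hgi, zero_mul, ite_self, mul_zero]
    · rw [hx.pbw_baseDelta_apply hq ht ht2 (hmax i (Finset.mem_filter.mpr ⟨hi, hgi⟩)),
        mul_ite, mul_ite, mul_zero, mul_zero, mul_left_comm]

theorem linearIndependent_pbwSph {q t : ℂ} (hq : q ≠ 0) (ht : t ≠ 0) (ht2 : 1 + t ^ 2 ≠ 0) :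
    LinearIndependent ℂ (pbwSph q t) := by
  refine linearIndependent_iff'.mpr fun s g h => ?_
  have : Uncountable ℂ := Set.not_countable_univ_iff.mp not_countable_complex
  refine eq_zero_of_sum_smul_pbw_baseDelta_eq_zero hq ht ht2 fun x hx => ?_
  have himage := congrArg ((hx.realization hq ht).lift ht) h
  simp only [map_sum, map_smul, DAHARealization.lift_pbwSph, map_zero] at himage
  have hbase := congrArg (fun A : Module.End ℂ (Weight → ℂ) => A baseDelta) himage
  simpa only [LinearMap.sum_apply, LinearMap.smul_apply, LinearMap.zero_apply] using hbase

end LinearIndependence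

/-- The family of elements
`e(Y₁+Y₂)^{a₁}(Y₁Y₂)^{a₂}(t⁻²Y₁X₁+Y₂X₂)^{ε}(X₁+X₂)^{b₁}(X₁X₂)^{b₂}e`, with
`ε ∈ {0,1}`, `a₁, b₁ ∈ ℕ₀` and `a₂, b₂ ∈ ℤ` (negative exponents interpreted via the
inverse generators), is a ℂ-vector-space basis of the spherical double affine Hecke
algebra `eH_{t,q}e`. -/
theorem stmt4 (q t : ℂ) (hq : q ≠ 0) (ht : t ≠ 0) (ht2 : t ^ 2 ≠ -1) :
    LinearIndependent ℂ (pbwSph q t) ∧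
      Submodule.span ℂ (Set.range (pbwSph q t)) = sDAHA q t := by
  have ht2' : 1 + t ^ 2 ≠ 0 := fun h => ht2 (by linear_combination h)
  exact ⟨linearIndependent_pbwSph hq ht ht2', span_range_pbwSph hq ht ht2'⟩
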